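/- arXiv:2408.06020 — 2 statements merged into one kernel-verified Lean document; each statement's English description precedes it below -/
import Mathlib

section
/- For all integers k ≥ 3 and r ≥ 2 it holds that h_r(k) ≥ max{f(k), g_r(k)}. -/
open Finset

def HyperUniform {V : Type*} (k : ℕ) (H : Finset (Finset V)) : Prop := ∀ e ∈ H, e.card = k

def IsPM {V : Type*} [Fintype V] (H M : Finset (Finset V)) : Prop :=
  M ⊆ H ∧ (∀ e ∈ M, ∀ f ∈ M, e ≠ f → Disjoint e f) ∧ ∀ v : V, ∃ e ∈ M, v ∈ e

def hdeg {V : Type*} [DecidableEq V] (H : Finset (Finset V)) (v : V) : ℕ :=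
  (H.filter (fun e => v ∈ e)).card

def IsVec (k r : ℕ) (a : ℕ → ℕ) : Prop :=
  (∀ i j : ℕ, i ≤ j → j < r → a i ≤ a j) ∧ (∑ i ∈ Finset.range r, a i) = k - 1

noncomputable def gfun (k r : ℕ) (a : ℕ → ℕ) : ℝ :=
  (((k - 1).factorial : ℝ) / (∏ i ∈ Finset.range r, ((a i).factorial : ℝ))) *
    (∏ i ∈ Finset.range r, (((r * a i + 1 : ℕ) : ℝ) / ((r * k : ℕ) : ℝ)) ^ (a i)) *
    (1 + ((a 0 : ℝ) / ((r * a 0 + 1 : ℕ) : ℝ)) *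
      ∑ i ∈ Finset.Ico 1 r, ((r * a i + 1 : ℕ) : ℝ) / ((a i + 1 : ℕ) : ℝ))

noncomputable def gThr (k r : ℕ) : ℝ :=
  sSup {x : ℝ | ∃ a : ℕ → ℕ, IsVec k r a ∧ x = gfun k r a}

noncomputable def mThr (k n : ℕ) : ℕ :=
  sInf {m : ℕ | ∀ H : Finset (Finset (Fin n)), HyperUniform k H →
    (∀ v : Fin n, m ≤ hdeg H v) → ∃ M, IsPM H M}

noncomputable def fThr (k : ℕ) : ℝ :=
  Filter.limsup (fun n : ℕ => (mThr k n : ℝ) / ((n - 1).choose (k - 1) : ℝ))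
    (Filter.atTop ⊓ Filter.principal {n : ℕ | k ∣ n})

def DiscProp (k r : ℕ) (h : ℝ) : Prop :=
  ∀ ε : ℝ, 0 < ε → ∃ δ : ℝ, 0 < δ ∧ ∃ n₀ : ℕ, ∀ n : ℕ, n₀ ≤ n → k ∣ n →
    ∀ H : Finset (Finset (Fin n)), HyperUniform k H →
      (∀ v : Fin n, (h + ε) * (((n - 1).choose (k - 1) : ℕ) : ℝ) ≤ (hdeg H v : ℝ)) →
      ∀ c : Finset (Fin n) → Fin r,
        ∃ M, IsPM H M ∧ ∃ i : Fin r,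
          (n : ℝ) / ((r : ℝ) * (k : ℝ)) + δ * (n : ℝ) ≤
            ((M.filter (fun e => c e = i)).card : ℝ)

noncomputable def hThr (k r : ℕ) : ℝ :=
  sInf {h : ℝ | 0 < h ∧ DiscProp k r h}


/-- Number of edges through `v` with prescribed intersection sizes. -/
lemma count_lower {V : Type*} [Fintype V] [DecidableEq V] {r : ℕ} (p : V → Fin r) (v : V)
    (b : Fin r → ℕ) :
    ∏ l, ((univ.filter (fun x => p x = l)).card - 1).choose (b l) ≤
      ((univ : Finset (Finset V)).filter (fun e => v ∈ e ∧
        ∀ l, (e.filter (fun x => p x = l)).card = b l + if l = p v then 1 else 0)).card := by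
  classical
  set S := Fintype.piFinset
    (fun l => powersetCard (b l) ((univ.filter (fun x => p x = l)).erase v)) with hS
  have h1 : ∏ l, ((univ.filter (fun x => p x = l)).card - 1).choose (b l) ≤ S.card := by
    rw [hS, Fintype.card_piFinset]
    apply Finset.prod_le_prod'
    intro l _
    rw [card_powersetCard]
    exact Nat.choose_le_choose _ Finset.pred_card_le_card_erase
  have key : ∀ f ∈ S, ∀ l,
      ((insert v (univ.biUnion f)).filter (fun x => p x = l)).erase v = f l := by
    intro f hf l
    rw [hS, Fintype.mem_piFinset] at hf
    have hf' : ∀ l x, x ∈ f l → x ≠ v ∧ p x = l := by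
      intro l x hx
      have := (mem_powersetCard.1 (hf l)).1 hx
      simpa using this
    ext x
    simp only [mem_erase, mem_filter, mem_insert, mem_biUnion, mem_univ, true_and]
    constructor
    · rintro ⟨hx, (h | ⟨i, hi⟩), hp⟩
      · exact absurd h hx
      · have := (hf' i x hi).2
        have : i = l := by rw [← this, hp]
        rwa [this] at hi
    · intro hx
      exact ⟨(hf' l x hx).1, Or.inr ⟨l, hx⟩, (hf' l x hx).2⟩
  refine h1.trans (Finset.card_le_card_of_injOn (fun f => insert v (univ.biUnion f)) ?_ ?_)
  · intro f hf
    have hf0 : f ∈ S := hf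
    simp only [coe_filter, Set.mem_ofPred_eq, mem_univ, true_and]
    refine ⟨mem_insert_self _ _, fun l => ?_⟩
    have hc : (f l).card = b l := by
      have := hf0
      rw [hS, Fintype.mem_piFinset] at this
      exact (mem_powersetCard.1 (this l)).2
    have hk := congrArg Finset.card (key f hf0 l)
    rw [hc] at hk
    by_cases hl : l = p v
    · rw [card_erase_of_mem (by simp [hl])] at hk
      have : 0 < ((insert v (univ.biUnion f)).filter (fun x => p x = l)).card :=
        card_pos.2 ⟨v, by simp [hl]⟩
      simp only [hl, if_true] at *
      omega
    · rw [erase_eq_of_notMem (by simp; exact fun h => hl h.symm)] at hk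
      simp [hl, hk]
  · intro f hf g hg hfg
    funext l
    rw [← key f hf l, ← key g hg l]
    simp only at hfg
    rw [hfg]

def edgeIdx {V : Type*} {r : ℕ} (p : V → Fin r) (a : Fin r → ℕ) (i : Fin r)
    (e : Finset V) : Prop :=
  ∀ l, (e.filter (fun x => p x = l)).card = a l + if l = i then 1 else 0

open Classical in
noncomputable def theH {V : Type*} [Fintype V] {r : ℕ} (p : V → Fin r) (a : Fin r → ℕ) :
    Finset (Finset V) := univ.filter (fun e => ∃ i, edgeIdx p a i e)

def idxB {r : ℕ} (a : Fin r → ℕ) (i j l : Fin r) : ℕ :=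
  (a l + if l = i then 1 else 0) - if l = j then 1 else 0

lemma deg_lower {V : Type*} [Fintype V] [DecidableEq V] {r : ℕ} (p : V → Fin r)
    (a : Fin r → ℕ) (v : V) :
    ∑ i, (if i = p v ∨ 1 ≤ a (p v) then
      ∏ l, ((univ.filter (fun x => p x = l)).card - 1).choose (idxB a i (p v) l) else 0) ≤
      hdeg (theH p a) v := by
  classical
  set T : Fin r → Finset (Finset V) := fun i => univ.filter (fun e => v ∈ e ∧ edgeIdx p a i e)
    with hT
  have h1 : ∑ i, (T i).card ≤ hdeg (theH p a) v := by
    rw [← card_biUnion]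
    · apply card_le_card
      intro e he
      simp only [hT, mem_biUnion, mem_filter, mem_univ, true_and] at he
      obtain ⟨i, hv, hi⟩ := he
      simp only [theH, mem_filter, mem_univ, true_and]
      exact ⟨⟨i, hi⟩, hv⟩
    · intro i _ j _ hij
      change Disjoint (T i) (T j)
      rw [Finset.disjoint_left]
      intro e he he'
      simp only [hT, mem_filter, mem_univ, true_and] at he he'
      have e1 := he.2 i
      have e2 := he'.2 i
      rw [e1] at e2
      simp [hij] at e2
  refine le_trans (Finset.sum_le_sum fun i _ => ?_) h1
  split_ifs with hc
  · refine (count_lower p v _).trans (card_le_card ?_)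
    intro e he
    simp only [hT, mem_filter, mem_univ, true_and] at he ⊢
    refine ⟨he.1, fun l => ?_⟩
    rw [he.2 l, idxB]
    by_cases hl : l = p v
    · subst hl
      rcases hc with hc | hc
      · simp [hc]
      · simp; omega
    · simp [hl]
  · exact Nat.zero_le _

lemma theH_uniform {V : Type*} [Fintype V] {r k : ℕ} (p : V → Fin r)
    (a : Fin r → ℕ) (ha : ∑ i, a i + 1 = k) : HyperUniform k (theH p a) := by
  classical
  intro e he
  simp only [theH, mem_filter, mem_univ, true_and] at he
  obtain ⟨i, hi⟩ := he
  rw [Finset.card_eq_sum_card_fiberwise (f := p) (t := univ) (fun x _ => by simp)]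
  rw [Finset.sum_congr rfl (fun l _ => hi l), Finset.sum_add_distrib]
  simp [ha]

open Classical in
noncomputable def theC {V : Type*} {r : ℕ} [NeZero r] (p : V → Fin r) (a : Fin r → ℕ)
    (e : Finset V) : Fin r := if h : ∃ i, edgeIdx p a i e then h.choose else 0

lemma pm_count {V : Type*} [Fintype V] {r k m : ℕ} [NeZero r] (p : V → Fin r)
    (a : Fin r → ℕ) (ha : ∑ i, a i + 1 = k)
    (hp : ∀ l, (univ.filter (fun x => p x = l)).card = (r * a l + 1) * m)
    (M : Finset (Finset V)) (hM : IsPM (theH p a) M) (i : Fin r) :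
    (M.filter (fun e => theC p a e = i)).card = m := by
  classical
  have hidx : ∀ e ∈ M, edgeIdx p a (theC p a e) e := by
    intro e he
    have := hM.1 he
    simp only [theH, mem_filter, mem_univ, true_and] at this
    rw [theC, dif_pos this]
    exact this.choose_spec
  have hcov : ∀ l, (univ.filter (fun x => p x = l)).card =
      ∑ e ∈ M, (e.filter (fun x => p x = l)).card := by
    intro l
    rw [← card_biUnion]
    · congr 1
      ext x
      obtain ⟨e, he, hx⟩ := hM.2.2 x
      simp only [mem_filter, mem_univ, true_and, mem_biUnion]
      exact ⟨fun h => ⟨e, he, hx, h⟩, fun ⟨_, _, _, h⟩ => h⟩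
    · intro e he f hf hef
      exact Finset.disjoint_filter_filter (hM.2.1 e he f hf hef)
  have hs : ∀ l, (r * a l + 1) * m = M.card * a l + (M.filter (fun e => theC p a e = l)).card := by
    intro l
    rw [← hp l, hcov l, Finset.sum_congr rfl (fun e he => hidx e he l), Finset.sum_add_distrib,
      Finset.sum_const, smul_eq_mul, Finset.card_filter]
    congr 1
    exact Finset.sum_congr rfl (fun e _ => by simp [eq_comm])
  have htot : ∑ l, (M.filter (fun e => theC p a e = l)).card = M.card :=
    (Finset.card_eq_sum_card_fiberwise (f := theC p a) (t := univ) (fun x _ => by simp)).symm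
  have hsum : r * k * m = k * M.card := by
    have h := Finset.sum_congr (rfl : (univ : Finset (Fin r)) = univ) (fun l _ => hs l)
    rw [Finset.sum_add_distrib, htot, ← Finset.mul_sum, ← Finset.sum_mul, Finset.sum_add_distrib,
      ← Finset.mul_sum] at h
    simp only [sum_const, card_univ, Fintype.card_fin, smul_eq_mul, mul_one] at h
    rw [← ha]
    linarith
  have hMc : M.card = r * m := by
    have hk : 0 < k := by omega
    apply Nat.eq_of_mul_eq_mul_left hk
    rw [← hsum]; ring
  have := hs i
  rw [hMc] at this
  have h2 : (r * a i + 1) * m = r * m * a i + m := by ring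
  omega

/-- limit of the degree ratio -/
noncomputable def tt {r : ℕ} (al : Fin r → ℝ) (c : Fin r → ℕ) : ℝ :=
  ∏ l, al l ^ c l / ((c l).factorial : ℝ)

lemma tt_succ {r : ℕ} (al : Fin r → ℝ) (c : Fin r → ℕ) (i : Fin r) :
    tt al (fun l => c l + if l = i then 1 else 0) = tt al c * (al i / (c i + 1)) := by
  classical
  have : ∀ l, al l ^ (c l + if l = i then 1 else 0) /
      (((c l + if l = i then 1 else 0).factorial : ℕ) : ℝ) =
      al l ^ c l / ((c l).factorial : ℝ) * (if l = i then al i / (c i + 1) else 1) := by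
    intro l
    split_ifs with h
    · subst h
      rw [Nat.factorial_succ, pow_succ]
      push_cast
      rw [mul_comm ((c l : ℝ) + 1), mul_div_mul_comm]
    · simp
  simp only [tt]
  rw [Finset.prod_congr rfl (fun l _ => this l), Finset.prod_mul_distrib]
  simp

lemma tt_idx {r : ℕ} (al : Fin r → ℝ) (hal : ∀ l, 0 < al l) (a : Fin r → ℕ) (i j : Fin r)
    (hij : i ≠ j) :
    (if i = j ∨ 1 ≤ a j then tt al (idxB a i j) else 0) =
      tt al a * ((a j / al j) * (al i / (a i + 1))) := by
  by_cases h : 1 ≤ a j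
  · rw [if_pos (Or.inr h)]
    set c : Fin r → ℕ := fun l => a l - if l = j then 1 else 0 with hc
    have h1 : a = fun l => c l + if l = j then 1 else 0 := by
      funext l
      by_cases hl : l = j
      · subst hl; simp [hc]; omega
      · simp [hc, hl]
    have h2 : idxB a i j = fun l => c l + if l = i then 1 else 0 := by
      funext l
      by_cases hl : l = j
      · subst hl; simp [hc, idxB, hij.symm]
      · simp [hc, idxB, hl]
    have h3 := tt_succ al c j
    rw [← h1] at h3
    rw [h2, tt_succ, h3]
    have hci : c i = a i := by simp [hc, hij]
    have hcj : ((c j : ℝ) + 1) = a j := by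
      have : c j + 1 = a j := by simp [hc]; omega
      exact_mod_cast this
    rw [hci, hcj]
    have := (hal j).ne'
    have : (a j : ℝ) ≠ 0 := by positivity
    field_simp
  · have h0 : a j = 0 := by omega
    simp [h0, hij]

lemma tt_sum {r : ℕ} (al : Fin r → ℝ) (hal : ∀ l, 0 < al l) (a : Fin r → ℕ) (j : Fin r) :
    ∑ i, (if i = j ∨ 1 ≤ a j then tt al (idxB a i j) else 0) =
      tt al a * (1 + (a j / al j) * ∑ i ∈ univ.erase j, al i / (a i + 1)) := by
  rw [← Finset.add_sum_erase _ _ (mem_univ j)]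
  rw [Finset.sum_congr rfl (fun i hi => tt_idx al hal a i j (ne_of_mem_erase hi)),
    ← Finset.mul_sum, ← Finset.mul_sum]
  have : idxB a j j = a := by
    funext l; simp [idxB]
  simp [this]
  ring

lemma idxB_add {r : ℕ} (a : Fin r → ℕ) (i j : Fin r) (h : i = j ∨ 1 ≤ a j) (l : Fin r) :
    idxB a i j l + (if l = j then 1 else 0) = a l + if l = i then 1 else 0 := by
  unfold idxB
  by_cases hl : l = j
  · subst hl
    rcases h with h | h
    · simp [h]
    · simp; omega
  · simp [hl]

lemma idxB_sum {r k : ℕ} (a : Fin r → ℕ) (ha : ∑ i, a i + 1 = k) (i j : Fin r)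
    (h : i = j ∨ 1 ≤ a j) : ∑ l, idxB a i j l = k - 1 := by
  have := Finset.sum_congr (rfl : (univ : Finset (Fin r)) = univ)
    (fun l _ => idxB_add a i j h l)
  rw [Finset.sum_add_distrib, Finset.sum_add_distrib] at this
  simp at this
  omega

lemma choose_lower (s b k : ℕ) (hb : b ≤ k) (hs : k ≤ s) (hs0 : 0 < s) :
    ((s : ℝ) - k) ^ b / (b.factorial : ℝ) ≤ ((s - 1).choose b : ℝ) := by
  rw [div_le_iff₀ (by positivity)]
  have h1 : (s - k) ^ b ≤ b.factorial * (s - 1).choose b := by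
    have h2 : (s - 1 + 1 - b) ^ b ≤ (s - 1).descFactorial b := Nat.pow_sub_le_descFactorial _ _
    rw [Nat.descFactorial_eq_factorial_mul_choose] at h2
    refine le_trans (Nat.pow_le_pow_left ?_ _) h2
    omega
  have h3 : (((s - k) ^ b : ℕ) : ℝ) ≤ ((b.factorial * (s - 1).choose b : ℕ) : ℝ) := by
    exact_mod_cast h1
  push_cast [Nat.cast_sub hs] at h3
  linarith

noncomputable def alm (k r : ℕ) (a : Fin r → ℕ) (m : ℕ) (l : Fin r) : ℝ :=
  ((r * a l + 1 : ℝ) - k / m) / (r * k)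

noncomputable def al0 (k r : ℕ) (a : Fin r → ℕ) (l : Fin r) : ℝ :=
  (r * a l + 1 : ℝ) / (r * k)

noncomputable def ratio {r : ℕ} (k : ℕ) (a : Fin r → ℕ) (al : Fin r → ℝ) (j : Fin r) : ℝ :=
  ((k - 1).factorial : ℝ) * ∑ i, (if i = j ∨ 1 ≤ a j then tt al (idxB a i j) else 0)

lemma term_lower {r k m : ℕ} (hr : 0 < r) (hkm : k ≤ m) (a : Fin r → ℕ)
    (ha : ∑ i, a i + 1 = k) (i j : Fin r) (h : i = j ∨ 1 ≤ a j) :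
    ((r * k * m : ℕ) : ℝ) ^ (k - 1) * tt (alm k r a m) (idxB a i j) ≤
      ∏ l, ((((r * a l + 1) * m - 1).choose (idxB a i j l) : ℕ) : ℝ) := by
  have hk : 0 < k := by omega
  have hm : 0 < m := by omega
  rw [← idxB_sum a ha i j h, ← Finset.prod_pow_eq_pow_sum, tt, ← Finset.prod_mul_distrib]
  have hkm' : (k : ℝ) ≤ m := by exact_mod_cast hkm
  have hk' : (0 : ℝ) < k := by exact_mod_cast hk
  have hm' : (0 : ℝ) < m := by exact_mod_cast hm
  have hr' : (0 : ℝ) < r := by exact_mod_cast hr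
  apply Finset.prod_le_prod
  · intro l _
    have : 0 ≤ alm k r a m l := by
      unfold alm
      apply div_nonneg _ (by positivity)
      have : (k : ℝ) / m ≤ 1 := (div_le_one hm').2 hkm'
      have : (0 : ℝ) ≤ r * a l := by positivity
      linarith
    positivity
  · intro l _
    have hb : idxB a i j l ≤ k := by
      have := Finset.single_le_sum (f := idxB a i j) (fun _ _ => Nat.zero_le _) (mem_univ l)
      rw [idxB_sum a ha i j h] at this
      omega
    have hs : m ≤ (r * a l + 1) * m := Nat.le_mul_of_pos_left _ (by omega)
    refine le_trans (le_of_eq ?_) (choose_lower ((r * a l + 1) * m) _ k hb (by omega) (by omega))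
    rw [← mul_div_assoc, ← mul_pow]
    congr 2
    unfold alm
    push_cast
    field_simp

lemma deg_ratio {r k m n : ℕ} (hr : 0 < r) (hkm : k ≤ m) (a : Fin r → ℕ)
    (ha : ∑ i, a i + 1 = k) (hn : n = r * k * m) (p : Fin n → Fin r)
    (hp : ∀ l, (univ.filter (fun x => p x = l)).card = (r * a l + 1) * m) (v : Fin n)
    (x : ℝ) (hx : x ≤ ratio k a (alm k r a m) (p v)) (hx0 : 0 ≤ x) :
    x * (((n - 1).choose (k - 1) : ℕ) : ℝ) ≤ (hdeg (theH p a) v : ℝ) := by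
  have h1 := deg_lower p a v
  have h2 : ((n - 1).choose (k - 1) : ℝ) ≤ (n : ℝ) ^ (k - 1) / ((k - 1).factorial : ℝ) := by
    refine (Nat.choose_le_pow_div _ _).trans ?_
    gcongr
    omega
  have h0 : 0 ≤ ratio k a (alm k r a m) (p v) := hx0.trans hx
  calc x * (((n - 1).choose (k - 1) : ℕ) : ℝ)
      ≤ ratio k a (alm k r a m) (p v) * ((n : ℝ) ^ (k - 1) / ((k - 1).factorial : ℝ)) := by
        gcongr
    _ = ∑ i, (if i = p v ∨ 1 ≤ a (p v) then
          (n : ℝ) ^ (k - 1) * tt (alm k r a m) (idxB a i (p v)) else 0) := by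
        have hf : ((k - 1).factorial : ℝ) ≠ 0 := by positivity
        rw [ratio]
        have : ∀ S : ℝ, ((k - 1).factorial : ℝ) * S * ((n : ℝ) ^ (k - 1) / ((k - 1).factorial : ℝ))
          = (n : ℝ) ^ (k - 1) * S := by intro S; field_simp
        rw [this, Finset.mul_sum]
        exact Finset.sum_congr rfl (fun i _ => by rw [mul_ite, mul_zero])
    _ ≤ ((∑ i, (if i = p v ∨ 1 ≤ a (p v) then
      ∏ l, ((univ.filter (fun x => p x = l)).card - 1).choose (idxB a i (p v) l) else 0) : ℕ) : ℝ) := by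
        push_cast
        apply Finset.sum_le_sum
        intro i _
        split_ifs with hc
        · have := term_lower hr hkm a ha i (p v) hc
          rw [← hn] at this
          simp only [hp]
          exact this
        · exact le_rfl
    _ ≤ _ := by exact_mod_cast h1

lemma ratio_tendsto (k r : ℕ) (a : Fin r → ℕ) (j : Fin r) :
    Filter.Tendsto (fun m : ℕ => ratio k a (alm k r a m) j) Filter.atTop
      (nhds (ratio k a (al0 k r a) j)) := by
  have hal : ∀ l, Filter.Tendsto (fun m : ℕ => alm k r a m l) Filter.atTop
      (nhds (al0 k r a l)) := by
    intro l
    unfold alm al0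
    have : Filter.Tendsto (fun m : ℕ => (k : ℝ) / m) Filter.atTop (nhds 0) :=
      tendsto_const_div_atTop_nhds_zero_nat _
    have := ((this.const_sub (r * a l + 1 : ℝ)).div_const (r * k : ℝ))
    simpa using this
  unfold ratio
  apply Filter.Tendsto.const_mul
  apply tendsto_finsetSum
  intro i _
  split_ifs
  · unfold tt
    apply tendsto_finsetProd
    intro l _
    exact ((hal l).pow _).div_const _
  · exact tendsto_const_nhds

lemma min_ineq (r x y S : ℝ) (hr : 2 ≤ r) (hx : 0 ≤ x) (hxy : x ≤ y)
    (hS : (r * y + 1) / (y + 1) + (r - 1) * ((r * x + 1) / (x + 1)) ≤ S) :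
    x / (r * x + 1) * (S - (r * x + 1) / (x + 1)) ≤
      y / (r * y + 1) * (S - (r * y + 1) / (y + 1)) := by
  have hy : 0 ≤ y := hx.trans hxy
  have hx1 : 0 < r * x + 1 := by positivity
  have hy1 : 0 < r * y + 1 := by positivity
  have hx2 : 0 < x + 1 := by positivity
  have hy2 : 0 < y + 1 := by positivity
  set P := (r * x + 1) / (x + 1) with hP
  set Q := (r * y + 1) / (y + 1) with hQ
  have hP1 : 1 ≤ P := by rw [hP, le_div_iff₀ hx2]; nlinarith
  have hP2 : P ≤ r := by rw [hP, div_le_iff₀ hx2]; nlinarith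
  have hQ2 : Q ≤ r := by rw [hQ, div_le_iff₀ hy2]; nlinarith
  have hPQ : P * Q ≤ S := by nlinarith [mul_nonneg (sub_nonneg.2 hP1) (sub_nonneg.2 hQ2)]
  have e : y / (r * y + 1) * (S - Q) - x / (r * x + 1) * (S - P) =
      (y - x) / ((r * x + 1) * (r * y + 1)) * (S - P * Q) := by
    rw [hP, hQ]; field_simp; ring
  have : 0 ≤ (y - x) / ((r * x + 1) * (r * y + 1)) * (S - P * Q) :=
    mul_nonneg (div_nonneg (by linarith) (by positivity)) (by linarith)
  linarith

lemma ratio_al0 {k r : ℕ} (hk : 0 < k) (hr : 0 < r) (a : Fin r → ℕ) (j : Fin r) :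
    ratio k a (al0 k r a) j = ((k - 1).factorial : ℝ) * (tt (al0 k r a) a *
      (1 + (a j / (r * a j + 1 : ℝ)) *
        (∑ i, (r * a i + 1 : ℝ) / (a i + 1) - (r * a j + 1 : ℝ) / (a j + 1)))) := by
  have hk' : (0 : ℝ) < k := by exact_mod_cast hk
  have hr' : (0 : ℝ) < r := by exact_mod_cast hr
  rw [ratio, tt_sum _ (fun l => by unfold al0; positivity),
    ← Finset.add_sum_erase (univ : Finset (Fin r)) (fun i => (r * a i + 1 : ℝ) / (a i + 1)) (mem_univ j)]
  congr 3
  rw [add_sub_cancel_left, Finset.mul_sum, Finset.mul_sum]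
  apply congrArg
  funext i
  unfold al0
  field_simp

lemma ratio_min {k r : ℕ} [NeZero r] (hk : 0 < k) (hr : 2 ≤ r) (a : Fin r → ℕ) 
    (hmono : ∀ j, a 0 ≤ a j) (j : Fin r) :
    ratio k a (al0 k r a) 0 ≤ ratio k a (al0 k r a) j := by
  by_cases hj : j = 0
  · rw [hj]
  rw [ratio_al0 hk (by omega), ratio_al0 hk (by omega)]
  have ht : 0 ≤ tt (al0 k r a) a := by
    unfold tt al0
    exact Finset.prod_nonneg (fun l _ => by positivity)
  have hr' : (2 : ℝ) ≤ r := by exact_mod_cast hr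
  refine mul_le_mul_of_nonneg_left (mul_le_mul_of_nonneg_left ?_ ht) (by positivity)
  rw [add_le_add_iff_left]
  apply min_ineq _ _ _ _ hr' (by positivity) (by exact_mod_cast hmono j)
  rw [← Finset.add_sum_erase (univ : Finset (Fin r)) (fun i => (r * a i + 1 : ℝ) / (a i + 1)) (mem_univ j)]
  rw [add_le_add_iff_left]
  have hc : ((univ : Finset (Fin r)).erase j).card = r - 1 := by
    rw [card_erase_of_mem (mem_univ j)]; simp
  have h := Finset.card_nsmul_le_sum (univ.erase j) (fun i => (r * a i + 1 : ℝ) / (a i + 1))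
    ((r * a 0 + 1 : ℝ) / (a 0 + 1)) (fun i _ => by
      have : (a 0 : ℝ) ≤ a i := by exact_mod_cast hmono i
      rw [div_le_div_iff₀ (by positivity) (by positivity)]
      nlinarith)
  rw [hc, nsmul_eq_mul, Nat.cast_sub (by omega)] at h
  simpa using h

lemma gfun_eq {k r : ℕ} [NeZero r] (hk : 0 < k) (hr : 2 ≤ r) (a : ℕ → ℕ) :
    gfun k r a = ratio k (fun i : Fin r => a i) (al0 k r (fun i : Fin r => a i)) 0 := by
  rw [ratio_al0 hk (by omega)]
  have h1 : ∑ i : Fin r, (r * a i + 1 : ℝ) / (a i + 1) =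
      (r * a 0 + 1 : ℝ) / (a 0 + 1) + ∑ i ∈ Finset.Ico 1 r, (r * a i + 1 : ℝ) / (a i + 1) := by
    rw [Fin.sum_univ_eq_sum_range (fun i => (r * a i + 1 : ℝ) / (a i + 1)) r,
      Finset.range_eq_Ico, Finset.sum_eq_sum_Ico_succ_bot (by omega)]
  have h0 : ((0 : Fin r) : ℕ) = 0 := by simp
  simp only [h0]
  rw [h1, add_sub_cancel_left]
  unfold gfun tt al0
  rw [Fin.prod_univ_eq_prod_range (fun l => ((r * a l + 1 : ℝ) / (r * k)) ^ a l / ((a l).factorial : ℝ)) r,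
    Finset.prod_div_distrib]
  push_cast
  ring

lemma exists_part {r n : ℕ} (s : Fin r → ℕ) (hs : ∑ l, s l = n) :
    ∃ p : Fin n → Fin r, ∀ l, (univ.filter (fun x => p x = l)).card = s l := by
  classical
  have e : Fin n ≃ Σ l : Fin r, Fin (s l) := Fintype.equivOfCardEq (by simp [hs])
  refine ⟨fun x => (e x).1, fun l => ?_⟩
  have : (univ.filter (fun x => (e x).1 = l)).card =
      (univ.filter (fun y : Σ l : Fin r, Fin (s l) => y.1 = l)).card := by
    apply Finset.card_equiv e
    simp
  rw [this]
  have : (univ.filter (fun y : Σ l : Fin r, Fin (s l) => y.1 = l)) =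
      (univ : Finset (Fin (s l))).map ⟨fun t => (⟨l, t⟩ : Σ l : Fin r, Fin (s l)),
        fun t t' h => by simpa using h⟩ := by
    ext ⟨l', t⟩
    simp only [mem_filter, mem_univ, true_and, mem_map, Function.Embedding.coeFn_mk]
    constructor
    · rintro rfl; exact ⟨t, rfl⟩
    · rintro ⟨t', ht⟩; exact (congrArg Sigma.fst ht).symm
  rw [this, card_map]
  simp

lemma g_le {k r : ℕ} (hk : 3 ≤ k) (hr : 2 ≤ r) (h : ℝ) (h0 : 0 < h) (hD : DiscProp k r h)
    (a : ℕ → ℕ) (ha : IsVec k r a) : gfun k r a ≤ h := by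
  haveI : NeZero r := ⟨by omega⟩
  by_contra hlt
  push Not at hlt
  set a' : Fin r → ℕ := fun i => a i with ha'
  have hsum : ∑ i, a' i + 1 = k := by
    rw [ha', Fin.sum_univ_eq_sum_range (fun i => a i) r, ha.2]; omega
  have hmono : ∀ j, a' 0 ≤ a' j := fun j => ha.1 _ _ (by simp) j.2
  obtain ⟨δ, hδ, n₀, H⟩ := hD ((gfun k r a - h) / 2) (by linarith)
  have hev : ∀ᶠ m : ℕ in Filter.atTop, ∀ j : Fin r,
      h + (gfun k r a - h) / 2 ≤ ratio k a' (alm k r a' m) j := by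
    rw [Filter.eventually_all]
    intro j
    apply (ratio_tendsto k r a' j).eventually_const_le
    have := ratio_min (by omega : 0 < k) hr a' hmono j
    rw [← gfun_eq (by omega) hr a] at this
    linarith
  obtain ⟨m, hm1, hm2⟩ := (hev.and (Filter.eventually_ge_atTop (max k n₀))).exists
  have hkm : k ≤ m := (le_max_left _ _).trans hm2
  have hnm : n₀ ≤ m := (le_max_right _ _).trans hm2
  obtain ⟨p, hp⟩ := exists_part (r := r) (n := r * k * m) (fun l => (r * a' l + 1) * m) (by
    rw [← Finset.sum_mul, Finset.sum_add_distrib, ← Finset.mul_sum, ← hsum]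
    simp; left; ring)
  obtain ⟨M, hM, i, hi⟩ := H (r * k * m) (hnm.trans (Nat.le_mul_of_pos_left _ (by positivity)))
    ⟨r * m, by ring⟩ (theH p a') (theH_uniform p a' hsum)
    (fun v => deg_ratio (by omega) hkm a' hsum rfl p hp v _ (hm1 _) (by linarith)) (theC p a')
  rw [pm_count p a' hsum hp M hM i] at hi
  have hk' : (0 : ℝ) < k := by exact_mod_cast (by omega : 0 < k)
  have hr' : (0 : ℝ) < r := by exact_mod_cast (by omega : 0 < r)
  have hm' : (0 : ℝ) < m := by exact_mod_cast (by omega : 0 < m)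
  have e : ((r * k * m : ℕ) : ℝ) / (r * k) = m := by push_cast; field_simp
  rw [e] at hi
  have : 0 < δ * ((r * k * m : ℕ) : ℝ) := by push_cast; positivity
  linarith

lemma f_le {k r : ℕ} (hk : 3 ≤ k) (h : ℝ) (h0 : 0 < h) (hD : DiscProp k r h)
    (hr : 2 ≤ r) : fThr k ≤ h := by
  haveI : NeZero r := ⟨by omega⟩
  apply le_of_forall_pos_le_add
  intro η hη
  obtain ⟨δ, hδ, n₀, H⟩ := hD (η / 2) (by linarith)
  have hne : (Filter.atTop ⊓ Filter.principal {n : ℕ | k ∣ n}).NeBot := by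
    rw [Filter.inf_principal_neBot_iff]
    intro U hU
    obtain ⟨N, hN⟩ := Filter.mem_atTop_sets.1 hU
    exact ⟨k * N, hN _ (Nat.le_mul_of_pos_left _ (by omega)), ⟨N, rfl⟩⟩
  unfold fThr
  apply Filter.limsup_le_of_le
  · apply Filter.IsCoboundedUnder.of_frequently_ge (a := 0)
    exact Filter.Eventually.frequently (Filter.Eventually.of_forall (fun n => by positivity))
  · rw [Filter.eventually_inf_principal]
    obtain ⟨N, hN⟩ := exists_nat_gt (2 / η)
    filter_upwards [Filter.eventually_ge_atTop (max n₀ (max (N + k + 1) k))] with n hn hkn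
    have hn0 : n₀ ≤ n := by omega
    set C : ℕ := (n - 1).choose (k - 1) with hC
    have hCN : N ≤ C := by
      have h1 : (n - 1) - (k - 1) + 1 ≤ C := by
        have h2 : ((n - 1) - (k - 1) + 1).choose 1 ≤ ((n - 1) - (k - 1) + (k - 1)).choose (k - 1) := by
          rw [Nat.choose_one_right, ← Nat.choose_symm_add]
          have hq : ∀ q t : ℕ, 1 ≤ t → q + 1 ≤ (q + t).choose q := by
            intro q t ht
            calc q + 1 = (q + 1).choose q := by simp
              _ ≤ (q + t).choose q := Nat.choose_le_choose _ (by omega)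
          exact hq _ _ (by omega)
        rw [Nat.choose_one_right, Nat.sub_add_cancel (by omega)] at h2
        exact h2
      omega
    have hCpos : (2 / η : ℝ) < C := hN.trans_le (by exact_mod_cast hCN)
    have hC0 : (0 : ℝ) < C := lt_trans (by positivity) hCpos
    have hm : mThr k n ≤ ⌈(h + η / 2) * (C : ℝ)⌉₊ := by
      apply Nat.sInf_le
      intro H' hU hd
      obtain ⟨M, hM, -⟩ := H n hn0 hkn H' hU (fun v => by
        exact (Nat.le_ceil _).trans (by exact_mod_cast hd v)) (fun _ => 0)
      exact ⟨M, hM⟩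
    rw [div_le_iff₀ hC0]
    have h1 : (mThr k n : ℝ) ≤ (⌈(h + η / 2) * (C : ℝ)⌉₊ : ℝ) := by exact_mod_cast hm
    have h2 := Nat.ceil_lt_add_one (a := (h + η / 2) * (C : ℝ)) (by positivity)
    rw [div_lt_iff₀ hη] at hCpos
    nlinarith

lemma disc_one {k r : ℕ} (hk : 3 ≤ k) : DiscProp k r 1 := by
  intro ε hε
  refine ⟨1, one_pos, k, fun n hn hkn H hU hd c => ?_⟩
  exfalso
  have hpos : 0 < n := by omega
  set v : Fin n := ⟨0, hpos⟩
  have h1 : hdeg H v ≤ (n - 1).choose (k - 1) := by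
    have : ((univ : Finset (Fin n)).erase v).card = n - 1 := by simp
    rw [← this, ← card_powersetCard]
    apply Finset.card_le_card_of_injOn (fun e => e.erase v)
    · intro e he
      have he' : e ∈ H.filter (fun e => v ∈ e) := he
      rw [mem_filter] at he'
      have hc := hU e he'.1
      refine mem_powersetCard.2 ⟨Finset.erase_subset_erase _ (subset_univ _), ?_⟩
      rw [card_erase_of_mem he'.2, hc]
    · intro e he f hf hef
      have he' : e ∈ H.filter (fun e => v ∈ e) := he
      have hf' : f ∈ H.filter (fun e => v ∈ e) := hf
      rw [mem_filter] at he' hf'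
      rw [← insert_erase he'.2, ← insert_erase hf'.2]
      exact congrArg _ hef
  have h2 := hd v
  have h3 : (hdeg H v : ℝ) ≤ ((n - 1).choose (k - 1) : ℕ) := by exact_mod_cast h1
  have h4 : (0 : ℝ) < ((n - 1).choose (k - 1) : ℕ) := by
    exact_mod_cast Nat.choose_pos (by omega)
  nlinarith

theorem discrepancy_threshold_lower_bound (k r : ℕ) (hk : 3 ≤ k) (hr : 2 ≤ r) :
    max (fThr k) (gThr k r) ≤ hThr k r := by
  apply le_csInf
  · exact ⟨1, one_pos, disc_one hk⟩
  · rintro h ⟨h0, hD⟩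
    apply max_le (f_le hk h h0 hD hr)
    apply Real.sSup_le _ h0.le
    rintro x ⟨a, ha, rfl⟩
    exact g_le hk hr h h0 hD a ha
end

section
/- For all integers k ≥ 3 and r ≥ 2, there exists a real γ = γ(k,r) > 0 such that the following holds: for every η > 0 there is n_0 = n_0(k,r,η) such that for every k-graph H on n ≥ n_0 vertices with n ≡ 0 (mod k), if δ(H) > (max{f(k), g_r(k)} + η)·C(n−1,k−1), then for every r-edge-coloring of E(H) there is a perfect matching of H containing at least (n/(rk))·(1 + γ·η) edges of the same color. -/
open Finset

lemma dm_hdeg_le {V : Type*} [Fintype V] [DecidableEq V] {k : ℕ} (H : Finset (Finset V))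
    (hH : HyperUniform k H) (v : V) : hdeg H v ≤ (Fintype.card V - 1).choose (k - 1) := by
  unfold hdeg
  have : ((univ.erase v).powersetCard (k-1)).card = (Fintype.card V - 1).choose (k - 1) := by
    rw [card_powersetCard, card_erase_of_mem (mem_univ v), card_univ]
  rw [← this]
  apply card_le_card_of_injOn (fun e => e.erase v)
  · intro e he
    simp only [coe_filter, Set.mem_ofPred_eq] at he
    simp only [mem_coe, mem_powersetCard]
    exact ⟨erase_subset_erase _ (subset_univ _), by rw [card_erase_of_mem he.2, hH e he.1]⟩
  · intro e he f hf hef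
    simp only [coe_filter, Set.mem_ofPred_eq] at he hf
    have := congrArg (insert v) hef
    simpa [insert_erase he.2, insert_erase hf.2] using this

lemma dm_codeg {V : Type*} [Fintype V] [DecidableEq V] {k : ℕ} (H : Finset (Finset V))
    (hH : HyperUniform k H) (v w : V) (hvw : v ≠ w) :
    (H.filter (fun e => v ∈ e ∧ w ∈ e)).card ≤ (Fintype.card V - 2).choose (k - 2) := by
  have : (((univ.erase v).erase w).powersetCard (k-2)).card
      = (Fintype.card V - 2).choose (k - 2) := by
    rw [card_powersetCard, card_erase_of_mem, card_erase_of_mem (mem_univ v), card_univ,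
      Nat.sub_sub]
    simp [hvw.symm]
  rw [← this]
  apply card_le_card_of_injOn (fun e => (e.erase v).erase w)
  · intro e he
    simp only [coe_filter, Set.mem_ofPred_eq] at he
    simp only [mem_coe, mem_powersetCard]
    refine ⟨erase_subset_erase _ (erase_subset_erase _ (subset_univ _)), ?_⟩
    rw [card_erase_of_mem, card_erase_of_mem he.2.1, hH e he.1, Nat.sub_sub]
    simp [hvw.symm, he.2.2]
  · intro e he f hf hef
    simp only [coe_filter, Set.mem_ofPred_eq] at he hf
    ext x
    have := congrArg (fun s => x ∈ s) hef
    simp only [mem_erase, eq_iff_iff] at this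
    by_cases h1 : x = v
    · subst h1; simp [he.2.1, hf.2.1]
    · by_cases h2 : x = w
      · subst h2; simp [he.2.2, hf.2.2]
      · simpa [h1, h2] using this

lemma dm_deg_avoid {V : Type*} [Fintype V] [DecidableEq V] {k : ℕ} (H : Finset (Finset V))
    (hH : HyperUniform k H) (v : V) (X : Finset V) :
    hdeg H v ≤ (H.filter (fun e => v ∈ e ∧ Disjoint (e.erase v) X)).card
      + X.card * (Fintype.card V - 2).choose (k - 2) := by
  unfold hdeg
  have hsub : H.filter (fun e => v ∈ e) ⊆ (H.filter (fun e => v ∈ e ∧ Disjoint (e.erase v) X)) ∪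
      (X.erase v).biUnion (fun w => H.filter (fun e => v ∈ e ∧ w ∈ e)) := by
    intro e he
    simp only [mem_filter] at he
    simp only [mem_union, mem_filter, mem_biUnion, mem_erase]
    by_cases hd : Disjoint (e.erase v) X
    · exact Or.inl ⟨he.1, he.2, hd⟩
    · right
      rw [not_disjoint_iff] at hd
      obtain ⟨w, hw, hwX⟩ := hd
      rw [mem_erase] at hw
      exact ⟨w, ⟨hw.1, hwX⟩, he.1, he.2, hw.2⟩
  calc _ ≤ _ := card_le_card hsub
    _ ≤ _ := card_union_le _ _
    _ ≤ _ := by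
      gcongr
      calc _ ≤ (X.erase v).card * (Fintype.card V - 2).choose (k - 2) := by
            apply card_biUnion_le_card_mul
            intro w hw
            rw [mem_erase] at hw
            exact dm_codeg H hH v w (Ne.symm hw.1)
        _ ≤ _ := by gcongr; exact erase_subset _ _

lemma dm_choose_two (n k : ℕ) (hk : 3 ≤ k) (hn : k ≤ n) :
    ((n - 2).choose (k - 2) : ℝ) ≤ 2 * k / n * ((n - 1).choose (k - 1) : ℝ) := by
  obtain ⟨m, rfl⟩ : ∃ m, n = m + 2 := ⟨n - 2, by omega⟩
  obtain ⟨j, rfl⟩ : ∃ j, k = j + 2 := ⟨k - 2, by omega⟩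
  simp only [Nat.add_sub_cancel]
  have h := Nat.add_one_mul_choose_eq m j
  have e1 : m + 2 - 1 = m + 1 := by omega
  have e2 : j + 2 - 1 = j + 1 := by omega
  rw [e1, e2]
  have h' : ((m:ℝ) + 1) * (m.choose j : ℝ) = ((m+1).choose (j+1) : ℝ) * (j + 1) := by exact_mod_cast h
  push_cast
  rw [div_mul_eq_mul_div, le_div_iff₀ (by positivity)]
  have : (0:ℝ) ≤ (m.choose j : ℝ) := by positivity
  have : (0:ℝ) ≤ ((m+1).choose (j+1) : ℝ) := by positivity
  have : (0:ℝ) ≤ (m:ℝ) := by positivity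
  nlinarith

lemma dm_pow_le (m : ℕ) (ε : ℝ) (hε : 0 < ε) : ∃ n0 : ℕ, ∀ n : ℕ, n0 ≤ n →
    (n:ℝ)^m / (m.factorial : ℝ) ≤ (1 + ε) * ((n - 1).choose m : ℝ) := by
  obtain ⟨n0, hn0⟩ := exists_nat_ge ((m:ℝ)^2 * (1 + ε) / ε)
  refine ⟨n0 + m + 1, fun n hn => ?_⟩
  have h1 := Nat.pow_le_choose (α := ℝ) m (n - 1)
  have e : n - 1 + 1 - m = n - m := by omega
  rw [e] at h1
  have hnpos : (0:ℝ) < n := by exact_mod_cast (by omega : 0 < n)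
  have hb : (1:ℝ) - m * (m / n) ≤ (1 - (m:ℝ)/n)^m := by
    have := one_add_mul_le_pow (a := -((m:ℝ)/n)) (by
      have : (m:ℝ)/n ≤ 1 := by rw [div_le_one hnpos]; exact_mod_cast (by omega)
      linarith) m
    calc _ = 1 + (m:ℝ) * (-((m:ℝ)/n)) := by ring
      _ ≤ _ := this
      _ = _ := by ring
  have h2 : (n:ℝ)^m ≤ (1 + ε) * ((n - m : ℕ):ℝ)^m := by
    have : ((n - m : ℕ):ℝ) = n * (1 - (m:ℝ)/n) := by
      rw [Nat.cast_sub (by omega)]; field_simp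
    rw [this, mul_pow]
    have h3 : 1 ≤ (1 + ε) * (1 - (m:ℝ)/n)^m := by
      have h4 : (m:ℝ)^2 * (1+ε) ≤ ε * n := by
        rw [div_le_iff₀ hε] at hn0
        have : (n0:ℝ) ≤ n := by exact_mod_cast (by omega)
        nlinarith
      have h5 : (1:ℝ) ≤ (1+ε) * (1 - m * (m/n)) := by
        have : (1+ε) * ((m:ℝ) * (m/n)) ≤ ε := by
          rw [show (1+ε) * ((m:ℝ) * (m/n)) = ((m:ℝ)^2 * (1+ε))/n by ring, div_le_iff₀ hnpos]
          exact h4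
        linarith
      nlinarith
    have : (0:ℝ) ≤ (n:ℝ)^m := by positivity
    nlinarith
  calc _ ≤ (1 + ε) * ((n - m : ℕ):ℝ)^m / (m.factorial : ℝ) := by gcongr
    _ = (1 + ε) * (((n - m : ℕ):ℝ)^m / (m.factorial : ℝ)) := by ring
    _ ≤ _ := by gcongr

lemma dm_mThr_mem (k n : ℕ) (H : Finset (Finset (Fin n))) (hH : HyperUniform k H)
    (hd : ∀ v : Fin n, mThr k n ≤ hdeg H v) : ∃ M, IsPM H M := by
  have hne : {m : ℕ | ∀ H : Finset (Finset (Fin n)), HyperUniform k H →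
    (∀ v : Fin n, m ≤ hdeg H v) → ∃ M, IsPM H M}.Nonempty := by
    rcases Nat.eq_zero_or_pos n with h0 | h0
    · subst h0
      exact ⟨0, fun H _ _ => ⟨∅, by simp, by simp, fun v => v.elim0⟩⟩
    · refine ⟨(n-1).choose (k-1) + 1, fun H hH hd => ?_⟩
      have := hd ⟨0, h0⟩
      have h2 := dm_hdeg_le H hH ⟨0, h0⟩
      simp only [Fintype.card_fin] at h2
      omega
  exact Nat.sInf_mem hne H hH hd

lemma dm_mThr_le (k n : ℕ) (h0 : 0 < n) : mThr k n ≤ (n-1).choose (k-1) + 1 := by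
  apply Nat.sInf_le
  intro H hH hd
  have := hd ⟨0, h0⟩
  have h2 := dm_hdeg_le H hH ⟨0, h0⟩
  simp only [Fintype.card_fin] at h2
  omega

lemma dm_bdd (k : ℕ) : (Filter.atTop ⊓ Filter.principal {n : ℕ | k ∣ n}).IsBoundedUnder (· ≤ ·)
    (fun n : ℕ => (mThr k n : ℝ) / ((n - 1).choose (k - 1) : ℝ)) := by
  refine ⟨2, ?_⟩
  rw [Filter.eventually_map]
  apply Filter.Eventually.filter_mono inf_le_left
  filter_upwards [Filter.eventually_ge_atTop (k + 1)] with n hn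
  have h1 := dm_mThr_le k n (by omega)
  have h2 : 0 < (n-1).choose (k-1) := Nat.choose_pos (by omega)
  rw [div_le_iff₀ (by exact_mod_cast h2)]
  exact_mod_cast (by omega)

lemma dm_f_upper (k : ℕ) (η : ℝ) (hη : 0 < η) : ∃ n0 : ℕ, ∀ n : ℕ, n0 ≤ n → k ∣ n →
    ∀ H : Finset (Finset (Fin n)), HyperUniform k H →
      (∀ v : Fin n, (fThr k + η) * (((n - 1).choose (k - 1) : ℕ) : ℝ) ≤ (hdeg H v : ℝ)) →
      ∃ M, IsPM H M := by
  have h := Filter.eventually_lt_of_limsup_lt (show fThr k < fThr k + η by linarith) (dm_bdd k)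
  rw [Filter.eventually_inf_principal, Filter.eventually_atTop] at h
  obtain ⟨n0, hn0⟩ := h
  refine ⟨n0 + k + 1, fun n hn hkn H hH hd => dm_mThr_mem k n H hH fun v => ?_⟩
  have h1 := hn0 n (by omega) hkn
  have h2 : 0 < (n-1).choose (k-1) := Nat.choose_pos (by omega)
  rw [div_lt_iff₀ (by exact_mod_cast h2)] at h1
  have := hd v
  exact_mod_cast (h1.trans_le this).le

lemma dm_pow_quad (x : ℝ) (hx : 0 ≤ x) (m : ℕ) : 1 + m * x + m * (m - 1) / 2 * x^2 ≤ (1 + x)^m := by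
  induction m with
  | zero => simp
  | succ m ih =>
    rw [pow_succ]
    push_cast
    have : 0 ≤ (m:ℝ) * (m-1) := by
      rcases m with _ | m
      · simp
      · push_cast; rw [add_sub_cancel_right]; positivity
    have h3 : 0 ≤ (m:ℝ) * (m-1) * x^3 := by positivity
    have h4 := mul_le_mul_of_nonneg_right ih (by linarith : 0 ≤ 1 + x)
    refine le_trans ?_ h4
    linarith

lemma dm_pow_ratio (m : ℕ) (hm : 2 ≤ m) : (1 - 1/((m:ℝ)+1))^m ≤ 4/9 := by
  have hm' : (2:ℝ) ≤ m := by exact_mod_cast hm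
  have h := dm_pow_quad (1/(m:ℝ)) (by positivity) m
  have h2 : (9:ℝ)/4 ≤ (1 + 1/(m:ℝ))^m := by
    refine le_trans ?_ h
    have : (m:ℝ) * (1/m) = 1 := by field_simp
    rw [this, show (m:ℝ) * (m-1)/2 * (1/m)^2 = 1/2 - 1/(2*m) by field_simp]
    have : 1/(2*(m:ℝ)) ≤ 1/4 := by
      apply one_div_le_one_div_of_le <;> linarith
    linarith
  have h3 : (1 - 1/((m:ℝ)+1)) = (1 + 1/(m:ℝ))⁻¹ := by field_simp; ring
  rw [h3, inv_pow, inv_le_comm₀ (by positivity) (by norm_num)]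
  linarith

lemma dm_barrier (k t : ℕ) (hk : 3 ≤ k) (ht : 1 ≤ t) :
    (k*t-1).choose (k-1) ≤ mThr k (k*t) + (k*t - t).choose (k-1) := by
  by_contra hcon
  push Not at hcon
  set n := k * t with hn
  have htn : t ≤ n := by rw [hn]; nlinarith
  obtain ⟨A, -, hA⟩ := exists_subset_card_eq (s := (univ : Finset (Fin n))) (n := t - 1) (by simp; omega)
  obtain ⟨M, hM1, hM2, hM3⟩ := dm_mThr_mem k n
    ((univ.powersetCard k).filter (fun e => ¬ Disjoint e A)) (by
      intro e he; simp only [mem_filter, mem_powersetCard] at he; exact he.1.2) (by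
    intro v
    have hsub : (univ.erase v).powersetCard (k-1) ⊆
        ((((univ.powersetCard k).filter (fun e => ¬ Disjoint e A)).filter (fun e => v ∈ e)).image
          (fun e => e.erase v)) ∪ ((univ \ (insert v A)).powersetCard (k-1)) := by
      intro T hT
      rw [mem_powersetCard] at hT
      have hvT : v ∉ T := fun h => by simpa using hT.1 h
      rw [mem_union]
      by_cases hd : Disjoint (insert v T) A
      · right
        rw [mem_powersetCard]
        refine ⟨fun x hx => ?_, hT.2⟩
        simp only [mem_sdiff, mem_univ, true_and, mem_insert, not_or]
        refine ⟨fun h => hvT (h ▸ hx), disjoint_left.1 hd (mem_insert_of_mem hx)⟩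
      · left
        rw [mem_image]
        refine ⟨insert v T, ?_, erase_insert hvT⟩
        simp only [mem_filter, mem_powersetCard, subset_univ, true_and, mem_insert, true_or,
          and_true]
        exact ⟨by rw [card_insert_of_notMem hvT, hT.2]; omega, hd⟩
    have h1 := (card_le_card hsub).trans (card_union_le _ _)
    rw [card_powersetCard, card_erase_of_mem (mem_univ v), card_univ, Fintype.card_fin] at h1
    by_cases hvA : v ∈ A
    · have : hdeg ((univ.powersetCard k).filter (fun e => ¬ Disjoint e A)) v ≥ (n-1).choose (k-1) := by
        unfold hdeg
        have : (n-1).choose (k-1) = ((univ.erase v).powersetCard (k-1)).card := by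
          rw [card_powersetCard, card_erase_of_mem (mem_univ v), card_univ, Fintype.card_fin]
        rw [this]
        apply card_le_card_of_injOn (fun T => insert v T)
        · intro T hT
          simp only [mem_coe, mem_powersetCard] at hT
          have hvT : v ∉ T := fun h => by simpa using hT.1 h
          simp only [mem_coe, mem_filter, mem_powersetCard, subset_univ, true_and, mem_insert,
            true_or, and_true]
          exact ⟨by rw [card_insert_of_notMem hvT, hT.2]; omega,
            fun h => disjoint_left.1 h (mem_insert_self _ _) hvA⟩
        · intro T hT S hS hTS
          simp only [mem_coe, mem_powersetCard] at hT hS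
          have hvT : v ∉ T := fun h => by simpa using hT.1 h
          have hvS : v ∉ S := fun h => by simpa using hS.1 h
          have := congrArg (fun s => s.erase v) hTS
          simpa [erase_insert hvT, erase_insert hvS] using this
      omega
    · rw [card_powersetCard, card_sdiff_of_subset (subset_univ _), card_insert_of_notMem hvA, hA, card_univ,
        Fintype.card_fin, show t - 1 + 1 = t by omega] at h1
      have h3 := card_image_le (s := (((univ.powersetCard k).filter (fun e => ¬ Disjoint e A)).filter
        (fun e => v ∈ e))) (f := fun e => e.erase v)
      unfold hdeg
      omega)
  have hc : n ≤ k * M.card := by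
    have : (univ : Finset (Fin n)) ⊆ M.biUnion id := by
      intro v _
      obtain ⟨e, he, hv⟩ := hM3 v
      exact mem_biUnion.2 ⟨e, he, hv⟩
    have h2 := card_le_card this
    rw [card_univ, Fintype.card_fin] at h2
    refine h2.trans ?_
    rw [mul_comm]
    apply card_biUnion_le_card_mul
    intro e he
    have := hM1 he
    simp only [mem_filter, mem_powersetCard] at this
    exact this.1.2.le
  have hc2 : M.card ≤ A.card := by
    have hex : ∀ e ∈ M, ∃ a, a ∈ e ∧ a ∈ A := by
      intro e he
      have := hM1 he
      simp only [mem_filter] at this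
      exact not_disjoint_iff.1 this.2
    haveI : Nonempty (Fin n) := ⟨⟨0, by omega⟩⟩
    choose! g hg using hex
    apply card_le_card_of_injOn g (fun e he => (hg e he).2)
    intro e he f hf hef
    by_contra hne
    exact disjoint_left.1 (hM2 e he f hf hne) (hg e he).1 (hef ▸ (hg f hf).1)
  have : k * t ≤ k * (t - 1) := by
    calc k * t ≤ k * M.card := hc
      _ ≤ k * (t-1) := by rw [← hA]; gcongr
  have : t ≤ t - 1 := Nat.le_of_mul_le_mul_left this (by omega)
  omega

lemma dm_f_lower (k : ℕ) (hk : 3 ≤ k) : 5/9 ≤ fThr k := by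
  apply le_of_forall_pos_le_add
  intro ε hε
  have : 5/9 - ε ≤ fThr k := by
    apply Filter.le_limsup_of_frequently_le _ (dm_bdd k)
    rw [Filter.frequently_inf_principal, Filter.frequently_atTop]
    intro a
    obtain ⟨n0, hn0⟩ := dm_pow_le (k-1) ε hε
    set t := a + n0 + 1 with ht
    have hkt : t ≤ k * t := by nlinarith
    refine ⟨k * t, by omega, ?_, ?_⟩
    · exact dvd_mul_right _ _
    have hb := dm_barrier k t hk (by omega)
    have hp := hn0 (k*t) (by omega)
    have hkt' : k ≤ k * t := Nat.le_mul_of_pos_right _ (by omega)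
    have hC : 0 < (k*t-1).choose (k-1) := Nat.choose_pos (by omega)
    rw [le_div_iff₀ (by exact_mod_cast hC)]
    have hb' : (((k*t-1).choose (k-1) : ℕ) : ℝ) ≤ mThr k (k*t) + ((k*t - t).choose (k-1) : ℕ) := by
      exact_mod_cast hb
    have h1 := Nat.choose_le_pow_div (α := ℝ) (k-1) (k*t-t)
    have h2 : ((k*t-t : ℕ) : ℝ) = ((k*t : ℕ):ℝ) * (1 - 1/(((k-1 : ℕ):ℝ)+1)) := by
      rw [Nat.cast_sub hkt, Nat.cast_sub (by omega : 1 ≤ k)]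
      push_cast
      have : (k:ℝ) ≠ 0 := by positivity
      rw [show (k:ℝ) - 1 + 1 = k by ring]
      field_simp
    rw [h2, mul_pow] at h1
    have h3 := dm_pow_ratio (k-1) (by omega)
    have h4 : ((k*t : ℕ):ℝ)^(k-1) * (1 - 1/(((k-1 : ℕ):ℝ)+1))^(k-1) / ((k-1).factorial : ℝ)
        ≤ (1 + ε) * ((k*t - 1).choose (k-1) : ℝ) * (4/9) := by
      calc _ = ((k*t : ℕ):ℝ)^(k-1) / ((k-1).factorial : ℝ) * (1 - 1/(((k-1 : ℕ):ℝ)+1))^(k-1) := by ring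
        _ ≤ _ := by
          apply mul_le_mul hp h3 _ (by positivity)
          apply pow_nonneg
          rw [sub_nonneg, div_le_one (by positivity)]
          linarith [Nat.cast_nonneg (α := ℝ) (k-1)]
    have hC' : (0:ℝ) < ((k*t-1).choose (k-1) : ℕ) := by exact_mod_cast hC
    nlinarith
  linarith

def DmMat {V : Type*} (H A : Finset (Finset V)) : Prop :=
  A ⊆ H ∧ ∀ e ∈ A, ∀ f ∈ A, e ≠ f → Disjoint e f

def DmGadget {V : Type*} [DecidableEq V] {r : ℕ} (k : ℕ) (H : Finset (Finset V))
    (c : Finset V → Fin r) (i : Fin r) (p : Finset (Finset V) × Finset (Finset V)) : Prop :=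
  DmMat H p.1 ∧ DmMat H p.2 ∧ p.1.biUnion id = p.2.biUnion id ∧
    (p.1.biUnion id).card ≤ k * (k + 1) ∧
    (p.1.filter (fun e => c e = i)).card < (p.2.filter (fun e => c e = i)).card

lemma dm_family {α V : Type*} [DecidableEq α] [DecidableEq V] (P : α → Prop) (s : α → Finset V)
    (hne : ∀ p, P p → (s p).Nonempty) (N : ℕ) :
    (∃ F : Finset α, F.card = N ∧ (∀ p ∈ F, P p) ∧ ∀ p ∈ F, ∀ q ∈ F, p ≠ q → Disjoint (s p) (s q)) ∨
    ∃ F : Finset α, F.card < N ∧ (∀ p ∈ F, P p) ∧ ∀ p, P p → ¬ Disjoint (s p) (F.biUnion s) := by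
  induction N with
  | zero => exact Or.inl ⟨∅, by simp⟩
  | succ N ih =>
    rcases ih with ⟨F, hF, hP, hd⟩ | ⟨F, hF, hP, hd⟩
    · by_cases h : ∃ p, P p ∧ Disjoint (s p) (F.biUnion s)
      · obtain ⟨p, hp, hpd⟩ := h
        rw [disjoint_biUnion_right] at hpd
        have hpF : p ∉ F := by
          intro hpF
          have := hpd p hpF
          rw [disjoint_self_iff_empty] at this
          exact (hne p hp).ne_empty this
        left
        refine ⟨insert p F, by rw [card_insert_of_notMem hpF, hF], ?_, ?_⟩
        · intro q hq
          rcases mem_insert.1 hq with rfl | hq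
          · exact hp
          · exact hP q hq
        · intro q hq q' hq' hne
          rcases mem_insert.1 hq with h1 | h1
          · rcases mem_insert.1 hq' with h2 | h2
            · exact absurd (h1.trans h2.symm) hne
            · rw [h1]; exact hpd q' h2
          · rcases mem_insert.1 hq' with h2 | h2
            · rw [h2]; exact (hpd q h1).symm
            · exact hd q h1 q' h2 hne
      · right
        push Not at h
        exact ⟨F, by omega, hP, h⟩
    · exact Or.inr ⟨F, by omega, hP, hd⟩

lemma dm_mat_card {V : Type*} [DecidableEq V] {k : ℕ} {H A : Finset (Finset V)}
    (hH : HyperUniform k H) (hA : DmMat H A) : (A.biUnion id).card = A.card * k := by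
  rw [card_biUnion (t := id) (fun e he f hf h => hA.2 e he f hf h)]
  simp only [id]
  rw [sum_congr rfl (fun e he => hH e (hA.1 he)), sum_const, smul_eq_mul]

lemma dm_pm_card {V : Type*} [Fintype V] [DecidableEq V] {k : ℕ} {H M : Finset (Finset V)}
    (hH : HyperUniform k H) (hM : IsPM H M) : Fintype.card V = M.card * k := by
  rw [← dm_mat_card hH ⟨hM.1, hM.2.1⟩, ← card_univ]
  congr 1
  ext v
  obtain ⟨e, he, hv⟩ := hM.2.2 v
  simp only [mem_univ, mem_biUnion, true_iff]
  exact ⟨e, he, hv⟩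

lemma dm_cnt_sum {V : Type*} [DecidableEq V] {r : ℕ} (c : Finset V → Fin r)
    (M : Finset (Finset V)) : ∑ i, (M.filter (fun e => c e = i)).card = M.card := by
  rw [← card_eq_sum_card_fiberwise (f := c) (t := univ)]
  intro e _; simp

/-- if all colours have few edges then each colour has many edges -/
lemma dm_cnt_lower {V : Type*} [DecidableEq V] {r : ℕ} (c : Finset V → Fin r)
    (M : Finset (Finset V)) (i : Fin r) (t : ℝ)
    (ht : ∀ j, ((M.filter (fun e => c e = j)).card : ℝ) ≤ t) :
    (M.card : ℝ) - (r - 1) * t ≤ ((M.filter (fun e => c e = i)).card : ℝ) := by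
  have h := dm_cnt_sum c M
  rw [← add_sum_erase univ _ (mem_univ i)] at h
  have h2 : ∑ x ∈ univ.erase i, ((M.filter (fun e => c e = x)).card : ℝ) ≤ (r - 1) * t := by
    calc _ ≤ ∑ x ∈ univ.erase i, t := sum_le_sum (fun j _ => ht j)
      _ = _ := by
        rw [sum_const, card_erase_of_mem (mem_univ i), card_univ, Fintype.card_fin, nsmul_eq_mul,
          Nat.cast_sub (by have := i.2; omega)]
        simp
  have h' : ((M.filter (fun e => c e = i)).card : ℝ) +
    ∑ x ∈ univ.erase i, ((M.filter (fun e => c e = x)).card : ℝ) = M.card := by exact_mod_cast h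
  linarith

lemma dm_switch {V : Type*} [Fintype V] [DecidableEq V] {r k : ℕ} (hk : 1 ≤ k)
    (H : Finset (Finset V)) (hH : HyperUniform k H)
    (c : Finset V → Fin r) (i : Fin r) (F : Finset (Finset (Finset V) × Finset (Finset V)))
    (hF : ∀ p ∈ F, DmGadget k H c i p)
    (hd : ∀ p ∈ F, ∀ q ∈ F, p ≠ q → Disjoint (p.1.biUnion id) (q.1.biUnion id))
    (M0 : Finset (Finset V)) (hM0 : DmMat H M0)
    (hM0d : ∀ e ∈ M0, Disjoint e (F.biUnion (fun p => p.1.biUnion id)))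
    (hcov : ∀ v, v ∉ F.biUnion (fun p => p.1.biUnion id) → ∃ e ∈ M0, v ∈ e) :
    ∃ MA MB, IsPM H MA ∧ IsPM H MB ∧
      (MA.filter (fun e => c e = i)).card + F.card ≤ (MB.filter (fun e => c e = i)).card := by
  have key : ∀ g : Finset (Finset V) × Finset (Finset V) → Finset (Finset V),
      (∀ p ∈ F, DmMat H (g p) ∧ (g p).biUnion id = p.1.biUnion id) →
      IsPM H (M0 ∪ F.biUnion g) ∧ ((M0 ∪ F.biUnion g).filter (fun e => c e = i)).card =
        (M0.filter (fun e => c e = i)).card + ∑ p ∈ F, ((g p).filter (fun e => c e = i)).card := by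
    intro g hg
    have hsub : ∀ p ∈ F, ∀ e ∈ g p, e ⊆ p.1.biUnion id := by
      intro p hp e he
      rw [← (hg p hp).2]
      exact subset_biUnion_of_mem id he
    have hdis : ∀ e ∈ M0, ∀ p ∈ F, ∀ f ∈ g p, Disjoint e f := by
      intro e he p hp f hf
      have := hM0d e he
      rw [disjoint_biUnion_right] at this
      exact disjoint_of_subset_right (hsub p hp f hf) (this p hp)
    have hdis2 : ∀ p ∈ F, ∀ q ∈ F, p ≠ q → ∀ e ∈ g p, ∀ f ∈ g q, Disjoint e f := by
      intro p hp q hq hpq e he f hf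
      exact disjoint_of_subset_left (hsub p hp e he)
        (disjoint_of_subset_right (hsub q hq f hf) (hd p hp q hq hpq))
    have hnself : ∀ e ∈ H, ¬ Disjoint e e := by
      intro e he h
      rw [disjoint_self_iff_empty] at h
      have := hH e he
      rw [h] at this
      simp at this
      omega
    refine ⟨⟨?_, ?_, ?_⟩, ?_⟩
    · apply union_subset hM0.1
      rw [biUnion_subset]
      exact fun p hp => (hg p hp).1.1
    · intro e he f hf hef
      simp only [mem_union, mem_biUnion] at he hf
      rcases he with he | ⟨p, hp, he⟩
      · rcases hf with hf | ⟨q, hq, hf⟩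
        · exact hM0.2 e he f hf hef
        · exact hdis e he q hq f hf
      · rcases hf with hf | ⟨q, hq, hf⟩
        · exact (hdis f hf p hp e he).symm
        · by_cases hpq : p = q
          · subst hpq
            exact (hg p hp).1.2 e he f hf hef
          · exact hdis2 p hp q hq hpq e he f hf
    · intro v
      by_cases hv : v ∈ F.biUnion (fun p => p.1.biUnion id)
      · rw [mem_biUnion] at hv
        obtain ⟨p, hp, hv⟩ := hv
        rw [← (hg p hp).2, mem_biUnion] at hv
        obtain ⟨e, he, hv⟩ := hv
        exact ⟨e, mem_union_right _ (mem_biUnion.2 ⟨p, hp, he⟩), hv⟩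
      · obtain ⟨e, he, hv⟩ := hcov v hv
        exact ⟨e, mem_union_left _ he, hv⟩
    · rw [filter_union, card_union_of_disjoint, filter_biUnion, card_biUnion]
      · intro p hp q hq hpq
        change Disjoint _ _
        rw [disjoint_left]
        intro e he he'
        rw [mem_filter] at he he'
        exact hnself e ((hg p hp).1.1 he.1) (hdis2 p hp q hq hpq e he.1 e he'.1)
      · rw [disjoint_left]
        intro e he he'
        rw [mem_filter] at he he'
        obtain ⟨p, hp, hep⟩ := mem_biUnion.1 he'.1
        exact hnself e (hM0.1 he.1) (hdis e he.1 p hp e hep)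
  obtain ⟨hA1, hA2⟩ := key Prod.fst (fun p hp => ⟨(hF p hp).1, rfl⟩)
  obtain ⟨hB1, hB2⟩ := key Prod.snd (fun p hp => ⟨(hF p hp).2.1, (hF p hp).2.2.1.symm⟩)
  refine ⟨_, _, hA1, hB1, ?_⟩
  rw [hA2, hB2, add_assoc]
  gcongr
  rw [card_eq_sum_ones, ← sum_add_distrib]
  exact sum_le_sum (fun p hp => (hF p hp).2.2.2.2)

lemma dm_transfer (k : ℕ) (n : ℕ) (H : Finset (Finset (Fin n))) (hH : HyperUniform k H)
    (S : Finset (Fin n)) (m : ℕ) (hm : Sᶜ.card = m) (d : ℝ)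
    (hpm : ∀ H' : Finset (Finset (Fin m)), HyperUniform k H' →
      (∀ v, d ≤ (hdeg H' v : ℝ)) → ∃ M, IsPM H' M)
    (hd : ∀ v, v ∉ S → d ≤ ((H.filter (fun e => v ∈ e ∧ Disjoint (e.erase v) S)).card : ℝ)) :
    ∃ M0, DmMat H M0 ∧ (∀ e ∈ M0, Disjoint e S) ∧ ∀ v, v ∉ S → ∃ e ∈ M0, v ∈ e := by
  set φ : Fin m ↪ Fin n := (Sᶜ.orderEmbOfFin hm).toEmbedding with hφ
  have hφS : ∀ x, φ x ∉ S := fun x => by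
    have := Sᶜ.orderEmbOfFin_mem hm x
    rw [mem_compl] at this
    exact this
  have hφsurj : ∀ v, v ∉ S → ∃ x, φ x = v := by
    intro v hv
    have : v ∈ Set.range (Sᶜ.orderEmbOfFin hm) := by
      rw [range_orderEmbOfFin]; simpa using hv
    exact this
  obtain ⟨M', hM'⟩ := hpm (univ.filter (fun e => e.map φ ∈ H)) (by
      intro e he
      rw [mem_filter] at he
      rw [← hH _ he.2, card_map]) (by
    intro v
    refine (hd (φ v) (hφS v)).trans ?_
    unfold hdeg
    have hsub : (H.filter (fun e => φ v ∈ e ∧ Disjoint (e.erase (φ v)) S)) ⊆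
        ((univ.filter (fun e : Finset (Fin m) => e.map φ ∈ H)).filter (fun e => v ∈ e)).image
          (fun e => e.map φ) := by
      intro e he
      simp only [mem_filter] at he
      obtain ⟨heH, hve, hde⟩ := he
      have hes : ∀ x ∈ e, x ∉ S := by
        intro x hx
        by_cases h : x = φ v
        · rw [h]; exact hφS v
        · exact disjoint_left.1 hde (mem_erase.2 ⟨h, hx⟩)
      have : (univ.filter (fun x => φ x ∈ e)).map φ = e := by
        ext x
        simp only [mem_map, mem_filter, mem_univ, true_and]
        constructor
        · rintro ⟨y, hy, rfl⟩; exact hy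
        · intro hx
          obtain ⟨y, rfl⟩ := hφsurj x (hes x hx)
          exact ⟨y, hx, rfl⟩
      rw [mem_image]
      refine ⟨_, ?_, this⟩
      simp only [mem_filter, mem_univ, true_and]
      rw [this]
      exact ⟨heH, hve⟩
    exact_mod_cast (card_le_card hsub).trans card_image_le)
  obtain ⟨h1, h2, h3⟩ := hM'
  refine ⟨M'.image (fun e => e.map φ), ⟨?_, ?_⟩, ?_, ?_⟩
  · intro e he
    obtain ⟨e', he', rfl⟩ := mem_image.1 he
    have := h1 he'
    rw [mem_filter] at this
    exact this.2
  · intro e he f hf hef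
    obtain ⟨e', he', rfl⟩ := mem_image.1 he
    obtain ⟨f', hf', rfl⟩ := mem_image.1 hf
    rw [disjoint_map]
    exact h2 e' he' f' hf' (fun h => hef (by rw [h]))
  · intro e he
    obtain ⟨e', he', rfl⟩ := mem_image.1 he
    rw [disjoint_left]
    intro x hx
    obtain ⟨y, _, rfl⟩ := mem_map.1 hx
    exact hφS y
  · intro v hv
    obtain ⟨x, rfl⟩ := hφsurj v hv
    obtain ⟨e, he, hx⟩ := h3 x
    exact ⟨e.map φ, mem_image_of_mem _ he, mem_map_of_mem _ hx⟩

/-- common neighbourhoods -/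
lemma dm_common {V : Type*} [Fintype V] [DecidableEq V] {k : ℕ} (H : Finset (Finset V))
    (hH : HyperUniform k H) (u v : V) (X : Finset V)
    (hdeg2 : ∀ u : V, ∀ Y : Finset V, Y.card ≤ X.card + 1 →
      ((Fintype.card V - 1).choose (k - 1) : ℝ) / 2
        < ((H.filter (fun e => u ∈ e ∧ Disjoint (e.erase u) Y)).card : ℝ)) :
    ∃ T : Finset V, Disjoint T X ∧ u ∉ T ∧ v ∉ T ∧ insert u T ∈ H ∧ insert v T ∈ H := by
  have main : ∀ u v : V, ∃ A : Finset (Finset V), A ⊆ (univ.erase v).powersetCard (k-1) ∧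
      ((Fintype.card V - 1).choose (k - 1) : ℝ) / 2 < A.card ∧
      ∀ T ∈ A, Disjoint T X ∧ u ∉ T ∧ v ∉ T ∧ insert u T ∈ H := by
    intro u v
    refine ⟨(H.filter (fun e => u ∈ e ∧ Disjoint (e.erase u) (insert v X))).image (fun e => e.erase u),
      ?_, ?_, ?_⟩
    · intro T hT
      simp only [mem_image, mem_filter] at hT
      obtain ⟨e, ⟨he, hu, hd⟩, rfl⟩ := hT
      rw [mem_powersetCard, card_erase_of_mem hu, hH e he]
      refine ⟨?_, rfl⟩
      intro x hx
      rw [mem_erase]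
      refine ⟨?_, mem_univ _⟩
      rintro rfl
      exact disjoint_left.1 hd hx (mem_insert_self _ _)
    · rw [card_image_of_injOn]
      · exact hdeg2 u _ (card_insert_le _ _)
      · intro e he f hf hef
        simp only [coe_filter, Set.mem_ofPred_eq] at he hf
        have := congrArg (insert u) hef
        simpa [insert_erase he.2.1, insert_erase hf.2.1] using this
    · intro T hT
      simp only [mem_image, mem_filter] at hT
      obtain ⟨e, ⟨he, hu, hd⟩, rfl⟩ := hT
      rw [insert_erase hu]
      rw [disjoint_insert_right] at hd
      exact ⟨hd.2, by simp, hd.1, he⟩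
  obtain ⟨A, hA1, hA2, hA3⟩ := main u v
  obtain ⟨B, hB1, hB2, hB3⟩ := main v u
  by_cases hAB : Disjoint A B
  · exfalso
    have hB1' : B ⊆ (univ.erase v).powersetCard (k-1) := by
      intro T hT
      have h1 := hB1 hT
      rw [mem_powersetCard] at h1 ⊢
      refine ⟨fun x hx => ?_, h1.2⟩
      rw [mem_erase]
      exact ⟨fun h => (hB3 T hT).2.1 (h ▸ hx), mem_univ _⟩
    have := card_le_card (union_subset hA1 hB1')
    rw [card_union_of_disjoint hAB, card_powersetCard, card_erase_of_mem (mem_univ _), card_univ] at this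
    have : (A.card : ℝ) + B.card ≤ (Fintype.card V - 1).choose (k - 1) := by exact_mod_cast this
    linarith
  · obtain ⟨T, hT1, hT2⟩ := not_disjoint_iff.1 hAB
    obtain ⟨a1, a2, a3, a4⟩ := hA3 T hT1
    exact ⟨T, a1, a2, a3, a4, (hB3 T hT2).2.2.2⟩

/-- colour vector of an edge -/
def dmCol {V : Type*} {r : ℕ} (c : Finset V → Fin r) (e : Finset V) : Fin r → ℤ :=
  Pi.single (c e) 1

def DmNG {V : Type*} [DecidableEq V] {r : ℕ} (k : ℕ) (H : Finset (Finset V)) (W : Finset V)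
    (c : Finset V → Fin r) : Prop :=
  ∀ A B : Finset (Finset V), DmMat H A → DmMat H B → A.biUnion id = B.biUnion id →
    Disjoint (A.biUnion id) W → (A.biUnion id).card ≤ k * (k + 1) →
    ∀ i, (A.filter (fun e => c e = i)).card = (B.filter (fun e => c e = i)).card

def DmCN {V : Type*} [DecidableEq V] (k : ℕ) (H : Finset (Finset V)) (W : Finset V) : Prop :=
  ∀ (u v : V) (X : Finset V), X.card ≤ 4 * k ^ 2 →
    ∃ T : Finset V, Disjoint T (W ∪ X) ∧ u ∉ T ∧ v ∉ T ∧ insert u T ∈ H ∧ insert v T ∈ H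

section
variable {V : Type*} [DecidableEq V] {r k : ℕ} {H : Finset (Finset V)} {W : Finset V}
  {c : Finset V → Fin r}

lemma dm_col_sum {ι : Type*} [Fintype ι] [DecidableEq ι] (E : ι → Finset V)
    (hE : Function.Injective E) (j : Fin r) :
    (∑ i, dmCol c (E i)) j = (((univ.image E).filter (fun e => c e = j)).card : ℤ) := by
  rw [filter_image, card_image_of_injective _ hE, Finset.sum_apply, card_filter]
  push_cast
  apply sum_congr rfl
  intro i _
  simp only [dmCol, Pi.single_apply, eq_comm]

lemma dm_indexed (hk : 3 ≤ k) (hH : HyperUniform k H) (hNG : DmNG k H W c)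
    {ι : Type*} [Fintype ι] [DecidableEq ι]
    (hι : Fintype.card ι ≤ k + 1) (E F : ι → Finset V) (hEH : ∀ i, E i ∈ H) (hFH : ∀ i, F i ∈ H)
    (hE : ∀ i j, i ≠ j → Disjoint (E i) (E j)) (hF : ∀ i j, i ≠ j → Disjoint (F i) (F j))
    (hEF : univ.biUnion E = univ.biUnion F) (hW : ∀ i, Disjoint (E i) W) :
    ∑ i, dmCol c (E i) = ∑ i, dmCol c (F i) := by
  have inj : ∀ E : ι → Finset V, (∀ i, E i ∈ H) → (∀ i j, i ≠ j → Disjoint (E i) (E j)) →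
      Function.Injective E := by
    intro E hEH hE i j hij
    by_contra hne
    have h := hE i j hne
    rw [hij, disjoint_self_iff_empty] at h
    have := hH _ (hEH j)
    rw [h] at this
    simp at this; omega
  have mat : ∀ E : ι → Finset V, (∀ i, E i ∈ H) → (∀ i j, i ≠ j → Disjoint (E i) (E j)) →
      DmMat H (univ.image E) := by
    intro E hEH hE
    refine ⟨?_, ?_⟩
    · intro e he
      obtain ⟨i, -, rfl⟩ := mem_image.1 he
      exact hEH i
    · intro e he f hf hef
      obtain ⟨i, -, rfl⟩ := mem_image.1 he
      obtain ⟨j, -, rfl⟩ := mem_image.1 hf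
      exact hE i j (fun h => hef (by rw [h]))
  have bi : ∀ E : ι → Finset V, (univ.image E).biUnion id = univ.biUnion E := by
    intro E; rw [image_biUnion]; rfl
  funext j
  rw [dm_col_sum E (inj E hEH hE), dm_col_sum F (inj F hFH hF)]
  congr 1
  apply hNG _ _ (mat E hEH hE) (mat F hFH hF)
  · rw [bi, bi, hEF]
  · rw [bi, disjoint_biUnion_left]
    exact fun i _ => hW i
  · rw [bi]
    calc _ ≤ (univ : Finset ι).card * k := card_biUnion_le_card_mul _ _ _ (fun i _ => (hH _ (hEH i)).le)
      _ ≤ (k+1) * k := by gcongr; rwa [card_univ]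
      _ = _ := by ring

lemma dm_gadget (hk : 3 ≤ k) (hH : HyperUniform k H) (hNG : DmNG k H W c)
    {ι : Type*} [Fintype ι] [DecidableEq ι]
    (hι : Fintype.card ι ≤ k + 1) (P Q T : ι → Finset V)
    (hPH : ∀ i, P i ∪ T i ∈ H) (hQH : ∀ i, Q i ∪ T i ∈ H)
    (hP : ∀ i j, i ≠ j → Disjoint (P i) (P j)) (hQ : ∀ i j, i ≠ j → Disjoint (Q i) (Q j))
    (hT : ∀ i j, i ≠ j → Disjoint (T i) (T j))
    (hTP : ∀ i j, Disjoint (T i) (P j)) (hTQ : ∀ i j, Disjoint (T i) (Q j))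
    (hPQ : univ.biUnion P = univ.biUnion Q) (hPW : ∀ i, Disjoint (P i) W)
    (hTW : ∀ i, Disjoint (T i) W) :
    ∑ i, dmCol c (P i ∪ T i) = ∑ i, dmCol c (Q i ∪ T i) := by
  apply dm_indexed hk hH hNG hι _ _ hPH hQH
  · intro i j hij
    simp only [disjoint_union_left, disjoint_union_right]
    exact ⟨⟨hP i j hij, hTP i j⟩, (hTP j i).symm, hT i j hij⟩
  · intro i j hij
    simp only [disjoint_union_left, disjoint_union_right]
    exact ⟨⟨hQ i j hij, hTQ i j⟩, (hTQ j i).symm, hT i j hij⟩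
  · ext x
    have := congrArg (fun s => x ∈ s) hPQ
    simp only [mem_biUnion, mem_univ, true_and, eq_iff_iff] at this
    simp only [mem_biUnion, mem_univ, true_and, mem_union, exists_or, this]
  · intro i
    rw [disjoint_union_left]
    exact ⟨hPW i, hTW i⟩

lemma dm_select (hk : 3 ≤ k) (hH : HyperUniform k H) (hCN : DmCN k H W)
    {ι : Type*} [DecidableEq ι] (u v : ι → V) (X : Finset V) (s : Finset ι)
    (hX : X.card + s.card * k ≤ 4 * k ^ 2) :
    ∃ T : ι → Finset V, (∀ i ∈ s, Disjoint (T i) W ∧ Disjoint (T i) X ∧ u i ∉ T i ∧ v i ∉ T i ∧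
      insert (u i) (T i) ∈ H ∧ insert (v i) (T i) ∈ H) ∧
      ∀ i ∈ s, ∀ j ∈ s, i ≠ j → Disjoint (T i) (T j) := by
  induction s using Finset.induction_on with
  | empty => exact ⟨fun _ => ∅, by simp, by simp⟩
  | insert a s ha ih =>
    rw [card_insert_of_notMem ha] at hX
    obtain ⟨T, hT1, hT2⟩ := ih (by nlinarith)
    obtain ⟨S, hS1, hS2, hS3, hS4, hS5⟩ := hCN (u a) (v a) (X ∪ s.biUnion T) (by
      calc _ ≤ X.card + (s.biUnion T).card := card_union_le _ _
        _ ≤ X.card + s.card * k := by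
          gcongr
          apply card_biUnion_le_card_mul
          intro i hi
          obtain ⟨-, -, h3, -, h5, -⟩ := hT1 i hi
          rw [← hH _ h5]
          exact card_le_card (subset_insert _ _)
        _ ≤ _ := by nlinarith)
    simp only [disjoint_union_right, disjoint_biUnion_right] at hS1
    have hne : ∀ i ∈ s, i ≠ a := fun i hi h => ha (h ▸ hi)
    refine ⟨Function.update T a S, ?_, ?_⟩
    · intro i hi
      rcases mem_insert.1 hi with rfl | hi
      · simp only [Function.update_self]
        exact ⟨hS1.1, hS1.2.1, hS2, hS3, hS4, hS5⟩
      · rw [Function.update_of_ne (hne i hi)]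
        exact hT1 i hi
    · intro i hi j hj hij
      rcases mem_insert.1 hi with h1 | h1
      · rcases mem_insert.1 hj with h2 | h2
        · exact absurd (h1.trans h2.symm) hij
        · rw [h1, Function.update_self, Function.update_of_ne (hne j h2)]
          exact hS1.2.2 j h2
      · rcases mem_insert.1 hj with h2 | h2
        · rw [h2, Function.update_self, Function.update_of_ne (hne i h1)]
          exact (hS1.2.2 i h1).symm
        · rw [Function.update_of_ne (hne j h2), Function.update_of_ne (hne i h1)]
          exact hT2 i h1 j h2 hij

/-- `T` is a common link set of `u` and `v`, avoiding `W`. -/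
def DmLink (H : Finset (Finset V)) (W : Finset V) (u v : V) (T : Finset V) : Prop :=
  Disjoint T W ∧ u ∉ T ∧ v ∉ T ∧ insert u T ∈ H ∧ insert v T ∈ H

lemma dm_wd0 (hk : 3 ≤ k) (hH : HyperUniform k H) (hNG : DmNG k H W c) (u v : V) (hu : u ∉ W)
    (hv : v ∉ W) (huv : u ≠ v) (T S : Finset V) (hT : DmLink H W u v T) (hS : DmLink H W u v S)
    (hTS : Disjoint T S) :
    dmCol c (insert u T) - dmCol c (insert v T) = dmCol c (insert u S) - dmCol c (insert v S) := by
  obtain ⟨t1, t2, t3, t4, t5⟩ := hT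
  obtain ⟨s1, s2, s3, s4, s5⟩ := hS
  have h := dm_gadget hk hH hNG (ι := Bool) (by simp; omega) (fun b => if b then {u} else {v})
    (fun b => if b then {v} else {u}) (fun b => if b then T else S)
    (by simpa [← insert_eq] using ⟨s5, t4⟩) (by simpa [← insert_eq] using ⟨s4, t5⟩)
    (by simp [huv, huv.symm]) (by simp [huv, huv.symm])
    (by simp [hTS, hTS.symm]) (by simp [*]) (by simp [*])
    (by ext x; simp [or_comm]) (by simp [hu, hv]) (by simp [s1, t1])
  simp only [Fintype.sum_bool, if_true, Bool.false_eq_true, if_false, ← insert_eq] at h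
  rw [sub_eq_sub_iff_add_eq_add]
  rw [h, add_comm]

lemma dm_link_card (hk : 3 ≤ k) (hH : HyperUniform k H) {u v : V} {T : Finset V}
    (hT : DmLink H W u v T) : T.card = k - 1 := by
  have := hH _ hT.2.2.2.1
  rw [card_insert_of_notMem hT.2.1] at this
  omega

lemma dm_wd (hk : 3 ≤ k) (hH : HyperUniform k H) (hNG : DmNG k H W c) (hCN : DmCN k H W)
    (u v : V) (hu : u ∉ W) (hv : v ∉ W) (T S : Finset V) (hT : DmLink H W u v T)
    (hS : DmLink H W u v S) :
    dmCol c (insert u T) - dmCol c (insert v T) = dmCol c (insert u S) - dmCol c (insert v S) := by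
  by_cases huv : u = v
  · subst huv; simp
  obtain ⟨R, hR1, hR2⟩ := hCN u v (T ∪ S) (by
    have := card_union_le T S
    rw [dm_link_card hk hH hT, dm_link_card hk hH hS] at this
    have : k - 1 ≤ k := by omega
    nlinarith)
  simp only [disjoint_union_right] at hR1
  have hR : DmLink H W u v R := ⟨hR1.1, hR2⟩
  rw [dm_wd0 hk hH hNG u v hu hv huv T R hT hR hR1.2.1.symm,
    dm_wd0 hk hH hNG u v hu hv huv S R hS hR hR1.2.2.symm]

lemma dm_three (hk : 3 ≤ k) (hH : HyperUniform k H) (hNG : DmNG k H W c) (hCN : DmCN k H W)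
    (u v z : V) (hu : u ∉ W) (hv : v ∉ W) (hz : z ∉ W) (huv : u ≠ v) (huz : u ≠ z) (hvz : v ≠ z)
    (T1 T2 T3 : Finset V) (h1 : DmLink H W u v T1)
    (h2 : DmLink H W v z T2) (h3 : DmLink H W u z T3) :
    dmCol c (insert u T1) - dmCol c (insert v T1) =
      (dmCol c (insert u T3) - dmCol c (insert z T3)) -
        (dmCol c (insert v T2) - dmCol c (insert z T2)) := by
  obtain ⟨T, hT1, hT2⟩ := dm_select hk hH hCN (ι := Fin 3) ![u, v, z] ![v, z, u] {u, v, z} univ (by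
    have : ({u, v, z} : Finset V).card ≤ 3 := card_le_three
    simp only [card_univ, Fintype.card_fin]
    nlinarith)
  simp only [mem_univ, true_imp_iff, forall_const, Fin.forall_fin_succ, Fin.forall_fin_zero_pi,
    IsEmpty.forall_iff, and_true] at hT1
  simp only [disjoint_insert_right, disjoint_singleton_right] at hT1
  simp at hT1
  obtain ⟨⟨a0, a1, a2, a3, a4⟩, ⟨b0, b1, b2, b3, b4⟩, ⟨c0, c1, c2, c3, c4⟩⟩ := hT1
  have h := dm_gadget hk hH hNG (ι := Fin 3) (by simp; omega) ![{u}, {v}, {z}]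
    ![{v}, {z}, {u}] T
    (by simp [Fin.forall_fin_succ, ← insert_eq]; tauto)
    (by simp [Fin.forall_fin_succ, ← insert_eq]; tauto)
    (by simp [Fin.forall_fin_succ]; tauto) (by simp [Fin.forall_fin_succ]; tauto)
    (fun i j hij => hT2 i (mem_univ _) j (mem_univ _) hij)
    (by simp [Fin.forall_fin_succ]; tauto) (by simp [Fin.forall_fin_succ]; tauto)
    (by ext x; simp [Fin.exists_fin_succ]; tauto) (by simp [Fin.forall_fin_succ]; tauto)
    (by simp [Fin.forall_fin_succ]; tauto)
  simp [Fin.sum_univ_three, ← insert_eq] at h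
  rw [dm_wd hk hH hNG hCN u v hu hv T1 (T 0) h1 (by unfold DmLink; tauto),
    dm_wd hk hH hNG hCN v z hv hz T2 (T 1) h2 (by unfold DmLink; tauto),
    dm_wd hk hH hNG hCN u z hu hz T3 (T 2) h3 (by unfold DmLink; tauto)]
  have h' := sub_eq_zero.2 h
  rw [← sub_eq_zero, ← h']
  abel

lemma dm_phi (hk : 3 ≤ k) (hH : HyperUniform k H) (hNG : DmNG k H W c) (hCN : DmCN k H W) :
    ∃ φ : V → Fin r → ℤ, ∀ u v, u ∉ W → v ∉ W → ∀ T, DmLink H W u v T →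
      dmCol c (insert u T) - dmCol c (insert v T) = φ u - φ v := by
  by_cases hz : ∃ z, z ∉ W
  swap
  · push Not at hz
    exact ⟨0, fun u v hu => absurd (hz u) hu⟩
  obtain ⟨z, hz⟩ := hz
  have hex : ∀ u, ∃ T, DmLink H W u z T := by
    intro u
    obtain ⟨T, h1, h2⟩ := hCN u z ∅ (by simp)
    exact ⟨T, by simpa using h1, h2⟩
  choose S hS using hex
  refine ⟨fun u => dmCol c (insert u (S u)) - dmCol c (insert z (S u)), ?_⟩
  intro u v hu hv T hT
  by_cases huv : u = v
  · subst huv; simp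
  by_cases huz : u = z
  · subst huz
    have hT' : DmLink H W v u T := by unfold DmLink at *; tauto
    have := dm_wd hk hH hNG hCN v u hv hu T (S v) hT' (hS v)
    simp only [sub_self, zero_sub, ← this, neg_sub]
  by_cases hvz : v = z
  · subst hvz
    have := dm_wd hk hH hNG hCN u v hu hv T (S u) hT (hS u)
    simp only [sub_self, sub_zero, ← this]
  exact dm_three hk hH hNG hCN u v z hu hv hz huv huz hvz T (S v) (S u) hT (hS v) (hS u)

lemma dm_edge0 (hk : 3 ≤ k) (hH : HyperUniform k H) (hNG : DmNG k H W c) (hCN : DmCN k H W)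
    (φ : V → Fin r → ℤ) (hφ : ∀ u v, u ∉ W → v ∉ W → ∀ T, DmLink H W u v T →
      dmCol c (insert u T) - dmCol c (insert v T) = φ u - φ v)
    (e f : Finset V) (he : e ∈ H) (hf : f ∈ H) (heW : Disjoint e W) (hfW : Disjoint f W)
    (hef : Disjoint e f) : dmCol c e - ∑ v ∈ e, φ v = dmCol c f - ∑ v ∈ f, φ v := by
  have σ : e ≃ f := equivOfCardEq (by rw [hH e he, hH f hf])
  obtain ⟨T, hT1, hT2⟩ := dm_select hk hH hCN (ι := e) (fun x => x.1) (fun x => (σ x).1) (e ∪ f) univ (by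
    have := card_union_le e f
    rw [hH e he, hH f hf] at this
    simp only [card_univ, Fintype.card_coe, hH e he]
    nlinarith)
  simp only [mem_univ, true_imp_iff, disjoint_union_right] at hT1 hT2
  have heW' : ∀ x ∈ e, x ∉ W := fun x hx => disjoint_left.1 heW hx
  have hfW' : ∀ x ∈ f, x ∉ W := fun x hx => disjoint_left.1 hfW hx
  have hσ : ∀ x : e, (σ x).1 ∈ f := fun x => (σ x).2
  have hcase : ∀ p : Option e → Option e → Prop, (∀ x, p none (some x)) → (∀ x, p (some x) none) →
      (∀ x y, x ≠ y → p (some x) (some y)) → ∀ i j, i ≠ j → p i j := by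
    intro p h1 h2 h3 i j hij
    rcases i with _ | x
    · rcases j with _ | y
      · exact absurd rfl hij
      · exact h1 y
    · rcases j with _ | y
      · exact h2 x
      · exact h3 x y (fun h => hij (by rw [h]))
  have h := dm_gadget hk hH hNG (ι := Option e) (by simp [hH e he])
    (fun i => i.elim e (fun x => {(σ x).1})) (fun i => i.elim f (fun x => {x.1}))
    (fun i => i.elim ∅ T)
    (by
      rintro (_ | x)
      · simpa using he
      · simpa [← insert_eq] using (hT1 x).2.2.2.2.2)
    (by
      rintro (_ | x)
      · simpa using hf
      · simpa [← insert_eq] using (hT1 x).2.2.2.2.1)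
    (by
      apply hcase
      · intro x
        simpa using disjoint_right.1 hef (hσ x)
      · intro x
        simpa using disjoint_right.1 hef (hσ x)
      · intro x y hxy
        simp only [Option.elim, disjoint_singleton]
        intro h
        exact hxy (σ.injective (Subtype.ext h)))
    (by
      apply hcase
      · intro x
        simpa using disjoint_left.1 hef x.2
      · intro x
        simpa using disjoint_left.1 hef x.2
      · intro x y hxy
        simp only [Option.elim, disjoint_singleton]
        intro h
        exact hxy (Subtype.ext h))
    (by
      apply hcase
      · intro x; simp
      · intro x; simp
      · intro x y hxy
        exact hT2 x y hxy)
    (by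
      rintro (_ | x) (_ | y)
      · simp
      · simp
      · exact (hT1 x).2.1.1
      · simpa using disjoint_right.1 (hT1 x).2.1.2 (hσ y))
    (by
      rintro (_ | x) (_ | y)
      · simp
      · simp
      · exact (hT1 x).2.1.2
      · simpa using disjoint_right.1 (hT1 x).2.1.1 y.2)
    (by
      ext x
      simp only [mem_biUnion, mem_univ, true_and]
      constructor
      · rintro ⟨_ | y, hy⟩
        · exact ⟨some ⟨x, hy⟩, by simp⟩
        · simp only [Option.elim, mem_singleton] at hy
          exact ⟨none, by simpa [hy] using hσ y⟩
      · rintro ⟨_ | y, hy⟩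
        · exact ⟨some (σ.symm ⟨x, hy⟩), by simp⟩
        · simp only [Option.elim, mem_singleton] at hy
          exact ⟨none, by simp [hy]⟩)
    (by
      rintro (_ | x)
      · exact heW
      · simpa using hfW' _ (hσ x))
    (by
      rintro (_ | x)
      · simp
      · exact (hT1 x).1)
  simp only [Fintype.sum_option, Option.elim, union_empty, ← insert_eq] at h
  have h2 : ∑ x : e, (dmCol c (insert x.1 (T x)) - dmCol c (insert (σ x).1 (T x)))
      = ∑ x : e, (φ x.1 - φ (σ x).1) := by
    apply sum_congr rfl
    intro x _
    exact hφ _ _ (heW' _ x.2) (hfW' _ (hσ x)) (T x) ⟨(hT1 x).1, (hT1 x).2.2⟩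
  rw [sum_sub_distrib, sum_sub_distrib, σ.sum_comp (fun y => φ y.1), sum_coe_sort e φ,
    sum_coe_sort f φ] at h2
  linear_combination h + h2

lemma dm_edge_exists (hk : 3 ≤ k) (hH : HyperUniform k H) (hCN : DmCN k H W) (v0 : V)
    (X : Finset V) (hX : X.card ≤ 4 * k ^ 2) : ∃ e ∈ H, Disjoint e W ∧ Disjoint e X := by
  obtain ⟨T, h1, h2, -, h4, -⟩ := hCN v0 v0 X hX
  have hc := hH _ h4
  rw [card_insert_of_notMem h2] at hc
  obtain ⟨t, ht⟩ : T.Nonempty := by rw [← card_pos]; omega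
  obtain ⟨S, s1, s2, -, s4, -⟩ := hCN t t X hX
  refine ⟨_, s4, ?_⟩
  rw [← disjoint_union_right, disjoint_insert_left]
  exact ⟨disjoint_left.1 h1 ht, s1⟩

lemma dm_edge (hk : 3 ≤ k) (hH : HyperUniform k H) (hNG : DmNG k H W c) (hCN : DmCN k H W)
    (φ : V → Fin r → ℤ) (hφ : ∀ u v, u ∉ W → v ∉ W → ∀ T, DmLink H W u v T →
      dmCol c (insert u T) - dmCol c (insert v T) = φ u - φ v)
    (e f : Finset V) (he : e ∈ H) (hf : f ∈ H) (heW : Disjoint e W) (hfW : Disjoint f W) :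
    dmCol c e - ∑ v ∈ e, φ v = dmCol c f - ∑ v ∈ f, φ v := by
  obtain ⟨x, -⟩ : e.Nonempty := by rw [← card_pos, hH e he]; omega
  obtain ⟨g, hg, hgW, hgX⟩ := dm_edge_exists hk hH hCN x (e ∪ f) (by
    have := card_union_le e f
    rw [hH e he, hH f hf] at this
    nlinarith)
  rw [disjoint_union_right] at hgX
  rw [dm_edge0 hk hH hNG hCN φ hφ e g he hg heW hgW hgX.1.symm,
    dm_edge0 hk hH hNG hCN φ hφ f g hf hg hfW hgW hgX.2.symm]

end

lemma dm_root {r : ℕ} (a b i j p q : Fin r)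
    (h : (Pi.single a 1 - Pi.single b 1 : Fin r → ℤ) - (Pi.single i 1 - Pi.single j 1) =
      Pi.single p 1 - Pi.single q 1) : a = b ∨ i = j ∨ a = i ∨ b = j := by
  by_contra hcon
  push Not at hcon
  obtain ⟨h1, h2, h3, h4⟩ := hcon
  have ea := congrFun h a
  have ej := congrFun h j
  have eb := congrFun h b
  have ei := congrFun h i
  simp only [Pi.sub_apply, Pi.single_apply] at ea ej eb ei
  grind

lemma dm_classify {V : Type*} {r : ℕ} (hr : 2 ≤ r) (φ : V → Fin r → ℤ) (U : Set V)
    (hφ : ∀ u ∈ U, ∀ v ∈ U, ∃ i j : Fin r, φ u - φ v = Pi.single i 1 - Pi.single j 1) :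
    ∃ κ : Fin r → ℤ, (∀ u ∈ U, ∃ i, φ u = κ + Pi.single i 1) ∨
      (∀ u ∈ U, ∃ i, φ u = κ - Pi.single i 1) := by
  by_cases hU : ∃ z, z ∈ U
  swap
  · push Not at hU
    exact ⟨0, Or.inl fun u hu => absurd hu (hU u)⟩
  obtain ⟨z, hz⟩ := hU
  by_cases hall : ∀ u ∈ U, φ u = φ z
  · refine ⟨φ z - Pi.single ⟨0, by omega⟩ 1, Or.inl fun u hu => ⟨⟨0, by omega⟩, ?_⟩⟩
    rw [hall u hu]; abel
  push Not at hall
  obtain ⟨u, hu, hne⟩ := hall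
  obtain ⟨i, j, hij⟩ := hφ u hu z hz
  have hijne : i ≠ j := by
    rintro rfl
    rw [sub_self, sub_eq_zero] at hij
    exact hne hij
  by_cases hA : ∀ w ∈ U, ∃ l, φ w - φ z = Pi.single l 1 - Pi.single j 1
  · refine ⟨φ z - Pi.single j 1, Or.inl fun w hw => ?_⟩
    obtain ⟨l, hl⟩ := hA w hw
    refine ⟨l, ?_⟩
    linear_combination hl
  by_cases hB : ∀ w ∈ U, ∃ l, φ w - φ z = Pi.single i 1 - Pi.single l 1
  · refine ⟨φ z + Pi.single i 1, Or.inr fun w hw => ?_⟩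
    obtain ⟨l, hl⟩ := hB w hw
    refine ⟨l, ?_⟩
    linear_combination hl
  exfalso
  push Not at hA hB
  obtain ⟨w1, hw1, h1⟩ := hA
  obtain ⟨w2, hw2, h2⟩ := hB
  obtain ⟨a, b, hab⟩ := hφ w1 hw1 z hz
  obtain ⟨a', b', hab'⟩ := hφ w2 hw2 z hz
  have hne1 : a ≠ b := by
    rintro rfl
    apply h1 j; rw [hab]; abel
  have hne2 : a' ≠ b' := by
    rintro rfl
    apply h2 i; rw [hab']; abel
  have hbj : b ≠ j := by
    rintro rfl
    exact h1 a hab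
  have hai : a' ≠ i := by
    rintro rfl
    exact h2 b' hab'
  obtain ⟨p, q, hpq⟩ := hφ w1 hw1 u hu
  have r1 := dm_root a b i j p q (by rw [← hab, ← hij, ← hpq]; abel)
  obtain ⟨p', q', hpq'⟩ := hφ w2 hw2 u hu
  have r2 := dm_root a' b' i j p' q' (by rw [← hab', ← hij, ← hpq']; abel)
  obtain ⟨p'', q'', hpq''⟩ := hφ w1 hw1 w2 hw2
  have r3 := dm_root a b a' b' p'' q'' (by rw [← hab, ← hab', ← hpq'']; abel)
  grind

lemma dm_structure {V : Type*} [DecidableEq V] {r k : ℕ} {H : Finset (Finset V)} {W : Finset V}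
    {c : Finset V → Fin r} (hr : 2 ≤ r)
    (hk : 3 ≤ k) (hH : HyperUniform k H) (hNG : DmNG k H W c) (hCN : DmCN k H W) :
    ∃ (cl : V → Fin r) (a : Fin r → ℤ),
      (∀ e ∈ H, Disjoint e W → ∀ j, ((e.filter (fun v => cl v = j)).card : ℤ) =
        a j + if c e = j then 1 else 0) ∨
      (∀ e ∈ H, Disjoint e W → ∀ j, ((e.filter (fun v => cl v = j)).card : ℤ) =
        a j - if c e = j then 1 else 0) := by
  obtain ⟨φ, hφ⟩ := dm_phi hk hH hNG hCN
  have hedge := dm_edge hk hH hNG hCN φ hφ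
  have hroot : ∀ u ∈ {v | v ∉ W}, ∀ v ∈ {v | v ∉ W}, ∃ i j : Fin r,
      φ u - φ v = Pi.single i 1 - Pi.single j 1 := by
    intro u hu v hv
    obtain ⟨T, h1, h2⟩ := hCN u v ∅ (by simp)
    have h := hφ u v hu hv T ⟨by simpa using h1, h2⟩
    exact ⟨_, _, h.symm⟩
  obtain ⟨κ, hκ⟩ := dm_classify hr φ _ hroot
  have hcount : ∀ (cl : V → Fin r) (e : Finset V) (j : Fin r),
      ((e.filter (fun v => cl v = j)).card : ℤ) = (∑ v ∈ e, (Pi.single (cl v) 1 : Fin r → ℤ)) j := by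
    intro cl e j
    rw [Finset.sum_apply, card_filter]
    push_cast
    apply sum_congr rfl
    intro i _
    simp only [Pi.single_apply, eq_comm]
  have hcol : ∀ e j, dmCol c e j = if c e = j then 1 else 0 := by
    intro e j
    simp only [dmCol, Pi.single_apply, eq_comm]
  by_cases hE : ∃ e ∈ H, Disjoint e W
  swap
  · push Not at hE
    exact ⟨fun _ => ⟨0, by omega⟩, 0, Or.inl fun e he hd => absurd hd (hE e he)⟩
  obtain ⟨f, hf, hfW⟩ := hE
  haveI : Nonempty (Fin r) := ⟨⟨0, by omega⟩⟩
  rcases hκ with hκ | hκ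
  · choose! cl hcl using hκ
    have hs : ∀ e ∈ H, Disjoint e W → ∑ v ∈ e, φ v = (k:ℤ) • κ + ∑ v ∈ e, (Pi.single (cl v) 1 : Fin r → ℤ) := by
      intro e he hd
      rw [sum_congr rfl (fun v hv => hcl v (disjoint_left.1 hd hv)), sum_add_distrib, sum_const, hH e he]
      simp
    refine ⟨cl, ∑ v ∈ f, (Pi.single (cl v) 1 : Fin r → ℤ) - dmCol c f, Or.inl fun e he hd j => ?_⟩
    have h := hedge e f he hf hd hfW
    rw [hs e he hd, hs f hf hfW] at h
    rw [hcount, ← hcol]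
    have := congrFun h j
    simp only [Pi.sub_apply, Pi.add_apply] at this ⊢
    linarith
  · choose! cl hcl using hκ
    have hs : ∀ e ∈ H, Disjoint e W → ∑ v ∈ e, φ v = (k:ℤ) • κ - ∑ v ∈ e, (Pi.single (cl v) 1 : Fin r → ℤ) := by
      intro e he hd
      rw [sum_congr rfl (fun v hv => hcl v (disjoint_left.1 hd hv)), sum_sub_distrib, sum_const, hH e he]
      simp
    refine ⟨cl, ∑ v ∈ f, (Pi.single (cl v) 1 : Fin r → ℤ) + dmCol c f, Or.inr fun e he hd j => ?_⟩
    have h := hedge e f he hf hd hfW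
    rw [hs e he hd, hs f hf hfW] at h
    rw [hcount, ← hcol]
    have := congrFun h j
    simp only [Pi.sub_apply, Pi.add_apply] at this ⊢
    linarith

/-- for two colours the second type reduces to the first; for `r ≥ 3` we keep both -/
lemma dm_structure' {V : Type*} [DecidableEq V] {r k : ℕ} {H : Finset (Finset V)} {W : Finset V}
    {c : Finset V → Fin r} (hr : 2 ≤ r)
    (hk : 3 ≤ k) (hH : HyperUniform k H) (hNG : DmNG k H W c) (hCN : DmCN k H W) :
    ∃ (cl : V → Fin r) (a : Fin r → ℤ),
      (∀ e ∈ H, Disjoint e W → ∀ j, ((e.filter (fun v => cl v = j)).card : ℤ) =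
        a j + if c e = j then 1 else 0) ∨
      (3 ≤ r ∧ ∀ e ∈ H, Disjoint e W → ∀ j, ((e.filter (fun v => cl v = j)).card : ℤ) =
        a j - if c e = j then 1 else 0) := by
  obtain ⟨cl, a, h | h⟩ := dm_structure hr hk hH hNG hCN
  · exact ⟨cl, a, Or.inl h⟩
  · by_cases hr3 : 3 ≤ r
    · exact ⟨cl, a, Or.inr ⟨hr3, h⟩⟩
    · have hr2 : r = 2 := by omega
      subst hr2
      refine ⟨fun v => (cl v).rev, fun j => a j.rev - 1, Or.inl fun e he hd j => ?_⟩
      have := h e he hd j.rev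
      have h1 : ∀ x : Fin 2, (x.rev = j) ↔ (x = j.rev) := fun x => Fin.rev_eq_iff
      simp only [h1]
      rw [this]
      generalize c e = x
      fin_cases x <;> fin_cases j <;> simp [Fin.rev]

noncomputable def dmw {r : ℕ} (y : Fin r → ℝ) (b : Fin r → ℕ) : ℝ :=
  ∏ j, (y j) ^ (b j) / ((b j).factorial : ℝ)

lemma dmw_nonneg {r : ℕ} (y : Fin r → ℝ) (hy : ∀ j, 0 ≤ y j) (b : Fin r → ℕ) : 0 ≤ dmw y b := by
  unfold dmw
  exact Finset.prod_nonneg (fun j _ => div_nonneg (pow_nonneg (hy j) _) (by positivity))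

lemma dmw_mono {r : ℕ} (x y : Fin r → ℝ) (hx : ∀ j, 0 ≤ x j) (hxy : ∀ j, x j ≤ y j)
    (b : Fin r → ℕ) : dmw x b ≤ dmw y b := by
  unfold dmw
  apply Finset.prod_le_prod
  · intro j _
    exact div_nonneg (pow_nonneg (hx j) _) (by positivity)
  · intro j _
    have := pow_le_pow_left₀ (hx j) (hxy j) (b j)
    gcongr

lemma dmw_scale {r : ℕ} (s : ℝ) (p : Fin r → ℝ) (b : Fin r → ℕ) :
    dmw (fun j => s * p j) b = s ^ (∑ j, b j) * dmw p b := by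
  unfold dmw
  rw [← Finset.prod_pow_eq_pow_sum, ← Finset.prod_mul_distrib]
  refine Finset.prod_congr rfl fun j _ => ?_
  rw [mul_pow]; ring

noncomputable def dmn {V : Type*} [Fintype V] {r : ℕ} (cl : V → Fin r) (j : Fin r) : ℝ :=
  ((univ.filter (fun v => cl v = j)).card : ℝ)

lemma dmn_nonneg {V : Type*} [Fintype V] {r : ℕ} (cl : V → Fin r) (j : Fin r) : 0 ≤ dmn cl j := by
  unfold dmn; positivity

lemma dmn_sum {V : Type*} [Fintype V] [DecidableEq V] {r : ℕ} (cl : V → Fin r) :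
    ∑ j, dmn cl j = (Fintype.card V : ℝ) := by
  unfold dmn
  have := Finset.card_eq_sum_card_fiberwise (f := cl) (s := (univ : Finset V)) (t := univ)
    (by intro x _; simp)
  rw [← Finset.card_univ, this]
  push_cast
  rfl

lemma dm_type_count {V : Type*} [Fintype V] [DecidableEq V] {r : ℕ} (cl : V → Fin r)
    (b : Fin r → ℕ) (Q : Finset (Finset V))
    (hQ : ∀ T ∈ Q, ∀ j, (T.filter (fun v => cl v = j)).card = b j) :
    (Q.card : ℝ) ≤ dmw (dmn cl) b := by
  have h1 : Q.card ≤ (Fintype.piFinset (fun j : Fin r =>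
      powersetCard (b j) (univ.filter (fun v => cl v = j)))).card := by
    apply Finset.card_le_card_of_injOn (fun T j => T.filter (fun v => cl v = j))
    · intro T hT
      simp only [Finset.mem_coe, Fintype.mem_piFinset, mem_powersetCard]
      intro j
      refine ⟨?_, hQ T hT j⟩
      intro v hv
      simp only [mem_filter, mem_univ, true_and] at hv ⊢
      exact hv.2
    · intro T hT T' hT' h
      ext v
      have := congrFun h (cl v)
      simp only at this
      have h2 := Finset.ext_iff.1 this v
      simpa using h2
  rw [Fintype.card_piFinset] at h1
  calc (Q.card : ℝ) ≤ ((∏ j, (powersetCard (b j) (univ.filter (fun v => cl v = j))).card : ℕ) : ℝ) := by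
        exact_mod_cast h1
    _ ≤ dmw (dmn cl) b := by
        push_cast
        unfold dmw dmn
        apply Finset.prod_le_prod
        · intro j _; positivity
        · intro j _
          rw [card_powersetCard]
          exact Nat.choose_le_pow_div _ _

lemma dm_multi {r : ℕ} (y : Fin r → ℝ) (hy : ∀ j, 0 ≤ y j) (m : ℕ) (B : Finset (Fin r → ℕ))
    (hB : ∀ b ∈ B, ∑ j, b j = m) :
    ∑ b ∈ B, dmw y b ≤ (∑ j, y j) ^ m / (m.factorial : ℝ) := by
  have h := Finset.sum_pow_eq_sum_piAntidiag (univ : Finset (Fin r)) y m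
  have h2 : ∀ b : Fin r → ℕ, ∑ j, b j = m →
      (Nat.multinomial univ b : ℝ) * ∏ i, y i ^ b i = (m.factorial : ℝ) * dmw y b := by
    intro b hb
    have := Nat.multinomial_spec (univ : Finset (Fin r)) b
    rw [hb] at this
    have h3 : (m.factorial : ℝ) = (∏ i, ((b i).factorial : ℝ)) * (Nat.multinomial univ b : ℝ) := by
      rw [← this]; push_cast; rfl
    unfold dmw
    rw [Finset.prod_div_distrib, h3]
    have : (∏ i, ((b i).factorial : ℝ)) ≠ 0 := Finset.prod_ne_zero_iff.2 (fun i _ => by positivity)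
    field_simp
  rw [le_div_iff₀ (by positivity), h, Finset.sum_mul]
  calc ∑ b ∈ B, dmw y b * (m.factorial : ℝ) = ∑ b ∈ B, (Nat.multinomial univ b : ℝ) * ∏ i, y i ^ b i := by
        refine Finset.sum_congr rfl fun b hb => ?_
        rw [h2 b (hB b hb)]; ring
    _ ≤ _ := by
        apply Finset.sum_le_sum_of_subset_of_nonneg
        · intro b hb
          simp [hB b hb]
        · intro b _ _
          exact mul_nonneg (by positivity) (Finset.prod_nonneg fun i _ => pow_nonneg (hy i) _)

lemma dm_prod_update {r : ℕ} (F : Fin r → ℕ → ℝ) (a : Fin r → ℕ) (i : Fin r) (x : ℕ) :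
    (∏ j, F j (Function.update a i x j)) * F i (a i) = (∏ j, F j (a j)) * F i x := by
  rw [← Finset.mul_prod_erase univ (fun j => F j (Function.update a i x j)) (mem_univ i),
    ← Finset.mul_prod_erase univ (fun j => F j (a j)) (mem_univ i)]
  have : ∏ j ∈ univ.erase i, F j (Function.update a i x j) = ∏ j ∈ univ.erase i, F j (a j) := by
    refine Finset.prod_congr rfl fun j hj => ?_
    rw [Function.update_of_ne (ne_of_mem_erase hj)]
  rw [this]; simp only [Function.update_self]; ring

lemma dmw_up {r : ℕ} (y : Fin r → ℝ) (hy : ∀ j, 0 < y j) (a : Fin r → ℕ) (i : Fin r) :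
    dmw y (Function.update a i (a i + 1)) * (a i + 1) = dmw y a * y i := by
  have h := dm_prod_update (fun j b => y j ^ b / (b.factorial : ℝ)) a i (a i + 1)
  unfold dmw
  have h1 : y i ^ a i ≠ 0 := by have := hy i; positivity
  have h2 : ((a i).factorial : ℝ) ≠ 0 := by positivity
  have h3 : y i ^ (a i + 1) / ((a i + 1).factorial : ℝ) = (y i ^ a i / ((a i).factorial:ℝ)) * (y i / (a i + 1)) := by
    rw [Nat.factorial_succ, pow_succ]; push_cast; field_simp
  rw [h3] at h
  have h4 : y i ^ a i / ((a i).factorial : ℝ) ≠ 0 := div_ne_zero h1 h2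
  have h5 := mul_right_cancel₀ h4 (h.trans (by ring : _ = ((∏ j, y j ^ (a j) / ((a j).factorial:ℝ)) * (y i / (a i + 1))) * (y i ^ a i / ((a i).factorial : ℝ))))
  rw [h5]
  field_simp

lemma dmw_down {r : ℕ} (y : Fin r → ℝ) (hy : ∀ j, 0 < y j) (a : Fin r → ℕ) (i : Fin r) (ha : 1 ≤ a i) :
    dmw y (Function.update a i (a i - 1)) * y i = dmw y a * a i := by
  have h := dmw_up y hy (Function.update a i (a i - 1)) i
  simp only [Function.update_self, Function.update_idem] at h
  have h1 : a i - 1 + 1 = a i := by omega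
  rw [h1, Function.update_eq_self] at h
  rw [← h, Nat.cast_sub ha]; push_cast; ring

lemma dm_deg_types {V ι : Type*} [Fintype V] [DecidableEq V] {r : ℕ} (cl : V → Fin r)
    (I : Finset ι) (b : ι → Fin r → ℕ) (Q : Finset (Finset V))
    (hQ : ∀ T ∈ Q, ∃ i ∈ I, ∀ j, (T.filter (fun v => cl v = j)).card = b i j) :
    (Q.card : ℝ) ≤ ∑ i ∈ I, dmw (dmn cl) (b i) := by
  have h1 : Q ⊆ I.biUnion (fun i => Q.filter (fun T => ∀ j, (T.filter (fun v => cl v = j)).card = b i j)) := by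
    intro T hT
    obtain ⟨i, hi, h⟩ := hQ T hT
    simp only [mem_biUnion, mem_filter]
    exact ⟨i, hi, hT, h⟩
  calc (Q.card : ℝ) ≤ ((∑ i ∈ I, (Q.filter (fun T => ∀ j, (T.filter (fun v => cl v = j)).card = b i j)).card : ℕ) : ℝ) := by
        exact_mod_cast (card_le_card h1).trans card_biUnion_le
    _ ≤ _ := by
        push_cast
        refine Finset.sum_le_sum fun i _ => dm_type_count cl (b i) _ ?_
        intro T hT
        exact (mem_filter.1 hT).2

lemma dm_gfun_le (k r : ℕ) (hk : 3 ≤ k) (hr : 2 ≤ r) (a : ℕ → ℕ) (ha : IsVec k r a) :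
    gfun k r a ≤ gThr k r := by
  unfold gThr
  apply le_csSup
  · refine ⟨((k-1).factorial : ℝ) * 1 * (1 + k * ∑ i ∈ Ico 1 r, ((r * k + 1 : ℕ) : ℝ)), ?_⟩
    rintro x ⟨b, hb, rfl⟩
    have hle : ∀ i ∈ range r, b i ≤ k - 1 := by
      intro i hi
      rw [← hb.2]
      exact Finset.single_le_sum (f := b) (fun _ _ => Nat.zero_le _) hi
    unfold gfun
    have h1 : ((k-1).factorial : ℝ) / (∏ i ∈ range r, ((b i).factorial : ℝ)) ≤ ((k-1).factorial : ℝ) := by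
      apply div_le_self (by positivity)
      have : (1:ℕ) ≤ ∏ i ∈ range r, (b i).factorial :=
        Nat.one_le_iff_ne_zero.2 (Finset.prod_ne_zero_iff.2 fun i _ => Nat.factorial_ne_zero _)
      exact_mod_cast this
    have h2 : ∏ i ∈ range r, (((r * b i + 1 : ℕ) : ℝ) / ((r * k : ℕ) : ℝ)) ^ (b i) ≤ 1 := by
      apply Finset.prod_le_one
      · intro i _; positivity
      · intro i hi
        apply pow_le_one₀ (by positivity)
        apply div_le_one_of_le₀ _ (by positivity)
        have := hle i hi
        have h3 : r * b i + 1 ≤ r * k := by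
          calc r * b i + 1 ≤ r * (k-1) + 1 := by gcongr
            _ ≤ r * (k-1) + r := by omega
            _ = r * ((k-1)+1) := by ring
            _ = r * k := by rw [Nat.sub_add_cancel (by omega)]
        exact_mod_cast h3
    have h0 : b 0 ≤ k := (hle 0 (by simp; omega)).trans (by omega)
    have h3 : (b 0 : ℝ) / ((r * b 0 + 1 : ℕ) : ℝ) ≤ k := by
      calc (b 0 : ℝ) / ((r * b 0 + 1 : ℕ) : ℝ) ≤ b 0 := by
            apply div_le_self (by positivity)
            push_cast
            nlinarith [(by positivity : (0:ℝ) ≤ (r:ℝ) * b 0)]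
        _ ≤ k := by exact_mod_cast h0
    have h4 : ∑ i ∈ Ico 1 r, ((r * b i + 1 : ℕ) : ℝ) / ((b i + 1 : ℕ) : ℝ) ≤ ∑ i ∈ Ico 1 r, ((r * k + 1 : ℕ) : ℝ) := by
      apply Finset.sum_le_sum
      intro i hi
      have := hle i (by simp at hi ⊢; omega)
      calc ((r * b i + 1 : ℕ) : ℝ) / ((b i + 1 : ℕ) : ℝ) ≤ ((r * b i + 1 : ℕ) : ℝ) := by
            apply div_le_self (by positivity)
            push_cast
            nlinarith [(by positivity : (0:ℝ) ≤ (b i:ℝ))]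
        _ ≤ _ := by
            have : r * b i + 1 ≤ r * k + 1 := by
              have : b i ≤ k := by omega
              gcongr
            exact_mod_cast this
    have h5 : 0 ≤ ∑ i ∈ Ico 1 r, ((r * b i + 1 : ℕ) : ℝ) / ((b i + 1 : ℕ) : ℝ) :=
      Finset.sum_nonneg fun i _ => by positivity
    have h6 : 0 ≤ ∏ i ∈ range r, (((r * b i + 1 : ℕ) : ℝ) / ((r * k : ℕ) : ℝ)) ^ (b i) :=
      Finset.prod_nonneg fun i _ => by positivity
    gcongr
  · exact ⟨a, ha, rfl⟩

noncomputable def dmp (k r : ℕ) (a : Fin r → ℕ) (j : Fin r) : ℝ :=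
  ((r * a j + 1 : ℕ) : ℝ) / ((r * k : ℕ) : ℝ)

lemma dm_g (k r : ℕ) (hk : 3 ≤ k) (hr : 2 ≤ r) (a : Fin r → ℕ) (ha : ∑ j, a j = k - 1) :
    ∃ i0 : Fin r, ((k-1).factorial : ℝ) * (dmw (dmp k r a) a + ∑ i ∈ univ.erase i0,
      (if a i0 = 0 then 0 else
        dmw (dmp k r a) (Function.update (Function.update a i (a i + 1)) i0 (a i0 - 1)))) ≤ gThr k r := by
  have hr0 : 0 < r := by omega
  have : NeZero r := ⟨by omega⟩
  set σ := Tuple.sort a with hσ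
  have hmono := Tuple.monotone_sort a
  set a' : ℕ → ℕ := fun i => if h : i < r then a (σ ⟨i, h⟩) else 0 with ha'
  have haf : ∀ i : Fin r, a' (i:ℕ) = a (σ i) := by
    intro i; simp [ha']
  have hvec : IsVec k r a' := by
    constructor
    · intro i j hij hj
      have hi : i < r := by omega
      simp only [ha', hi, hj, dif_pos]
      exact hmono (show (⟨i, hi⟩ : Fin r) ≤ ⟨j, hj⟩ from hij)
    · rw [Finset.sum_range]
      simp only [haf]
      rw [Equiv.sum_comp σ a, ha]
  refine ⟨σ ⟨0, hr0⟩, le_trans (le_of_eq ?_) (dm_gfun_le k r hk hr a' hvec)⟩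
  set i0 := σ ⟨0, hr0⟩ with hi0
  have hp : ∀ j, 0 < dmp k r a j := by
    intro j; unfold dmp
    have : 0 < r * k := by positivity
    have : (0:ℝ) < ((r*k : ℕ):ℝ) := by exact_mod_cast this
    positivity
  have hterm : ∀ i ∈ univ.erase i0, (if a i0 = 0 then 0 else
        dmw (dmp k r a) (Function.update (Function.update a i (a i + 1)) i0 (a i0 - 1)))
      = dmw (dmp k r a) a * (((a i0 : ℝ) / ((r * a i0 + 1 : ℕ) : ℝ)) *
        (((r * a i + 1 : ℕ) : ℝ) / ((a i + 1 : ℕ) : ℝ))) := by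
    intro i hi
    have hne := ne_of_mem_erase hi
    split_ifs with h0
    · simp [h0]
    · have h1 := dmw_up (dmp k r a) hp a i
      have h2 := dmw_down (dmp k r a) hp (Function.update a i (a i + 1)) i0
        (by rw [Function.update_of_ne hne.symm]; omega)
      rw [Function.update_of_ne hne.symm] at h2
      have e1 : dmw (dmp k r a) (Function.update a i (a i + 1)) = dmw (dmp k r a) a * dmp k r a i / (a i + 1) := by
        rw [eq_div_iff (by positivity)]; exact h1
      have e2 := (eq_div_iff (hp i0).ne').2 h2
      rw [e2, e1]
      unfold dmp
      have : (0:ℝ) < ((r*k : ℕ):ℝ) := by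
        have : 0 < r * k := by positivity
        exact_mod_cast this
      have : (0:ℝ) < ((r * a i0 + 1 : ℕ) : ℝ) := by positivity
      push_cast at *
      field_simp
  rw [Finset.sum_congr rfl hterm, ← Finset.mul_sum]
  have hsplit : ∑ i ∈ univ.erase i0, (((a i0 : ℝ) / ((r * a i0 + 1 : ℕ) : ℝ)) *
        (((r * a i + 1 : ℕ) : ℝ) / ((a i + 1 : ℕ) : ℝ)))
      = ((a' 0 : ℝ) / ((r * a' 0 + 1 : ℕ) : ℝ)) *
      ∑ i ∈ Finset.Ico 1 r, ((r * a' i + 1 : ℕ) : ℝ) / ((a' i + 1 : ℕ) : ℝ) := by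
    rw [← Finset.mul_sum]
    have h00 : a' 0 = a i0 := by simp [ha', hr0, hi0]
    rw [h00]
    congr 1
    have e1 := Finset.add_sum_erase univ (fun i => ((r * a i + 1 : ℕ) : ℝ) / ((a i + 1 : ℕ) : ℝ)) (mem_univ i0)
    have e2 := Finset.range_eq_Ico (a := r)
    have e3 := Finset.sum_eq_sum_Ico_succ_bot hr0 (fun i => ((r * a' i + 1 : ℕ) : ℝ) / ((a' i + 1 : ℕ) : ℝ))
    rw [← e2, Finset.sum_range] at e3
    simp only [haf] at e3
    rw [Equiv.sum_comp σ (fun i => ((r * a i + 1 : ℕ) : ℝ) / ((a i + 1 : ℕ) : ℝ)), h00, ← e1] at e3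
    simp only [zero_add] at e3
    linarith
  rw [hsplit]
  unfold gfun
  rw [Finset.prod_range, Finset.prod_range]
  simp only [haf]
  rw [Equiv.prod_comp σ (fun i => ((a i).factorial : ℝ)),
    Equiv.prod_comp σ (fun i => (((r * a i + 1 : ℕ) : ℝ) / ((r * k : ℕ) : ℝ)) ^ (a i))]
  unfold dmw dmp
  rw [Finset.prod_div_distrib]
  ring

lemma dm_g0 (k r : ℕ) (hk : 3 ≤ k) (hr : 2 ≤ r) :
    (((r * (k-1) + 1 : ℕ) : ℝ) / ((r * k : ℕ) : ℝ)) ^ (k-1) ≤ gThr k r := by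
  have hvec : IsVec k r (fun i => if i = r - 1 then k - 1 else 0) := by
    constructor
    · intro i j hij hj
      dsimp only
      split_ifs <;> omega
    · rw [Finset.sum_ite_eq' (range r) (r-1) (fun _ => k-1)]
      simp; omega
  refine le_trans (le_of_eq ?_) (dm_gfun_le k r hk hr _ hvec)
  unfold gfun
  have h0 : (0:ℕ) ≠ r - 1 := by omega
  have hm : r - 1 ∈ range r := by simp; omega
  rw [Finset.prod_eq_single_of_mem (r-1) hm, Finset.prod_eq_single_of_mem (r-1) hm]
  · simp only [if_true, if_neg h0]
    have : ((k-1).factorial : ℝ) ≠ 0 := by positivity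
    rw [div_self this]
    simp
  · intro i _ hi; simp [hi]
  · intro i _ hi; simp [hi]

lemma dm_sum_update {r : ℕ} (a : Fin r → ℕ) (i : Fin r) (x : ℕ) :
    (∑ j, Function.update a i x j) + a i = (∑ j, a j) + x := by
  rw [← Finset.add_sum_erase univ (fun j => Function.update a i x j) (mem_univ i),
    ← Finset.add_sum_erase univ (fun j => a j) (mem_univ i)]
  have : ∑ j ∈ univ.erase i, Function.update a i x j = ∑ j ∈ univ.erase i, a j := by
    refine Finset.sum_congr rfl fun j hj => ?_
    rw [Function.update_of_ne (ne_of_mem_erase hj)]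
  rw [this]; simp only [Function.update_self]; ring

lemma dm_erase_filter {V : Type*} [DecidableEq V] {r : ℕ} (cl : V → Fin r) (e : Finset V) (v : V)
    (hv : v ∈ e) (j : Fin r) :
    ((e.erase v).filter (fun u => cl u = j)).card + (if cl v = j then 1 else 0)
      = (e.filter (fun u => cl u = j)).card := by
  rw [Finset.filter_erase]
  split_ifs with h
  · rw [card_erase_add_one]
    simp [hv, h]
  · rw [erase_eq_of_notMem]
    · simp
    · simp [h]

lemma dm_plus_deg {V : Type*} [Fintype V] [DecidableEq V] {r : ℕ} (H : Finset (Finset V))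
    (W : Finset V) (c : Finset V → Fin r) (cl : V → Fin r) (a : Fin r → ℕ) (v : V)
    (hE : ∀ e ∈ H, Disjoint e W → ∀ j, (e.filter (fun v => cl v = j)).card
      = a j + if c e = j then 1 else 0) :
    ((H.filter (fun e => v ∈ e ∧ Disjoint e W)).card : ℝ) ≤
      dmw (dmn cl) a + ∑ i ∈ univ.erase (cl v), (if a (cl v) = 0 then 0 else
        dmw (dmn cl) (Function.update (Function.update a i (a i + 1)) (cl v) (a (cl v) - 1))) := by
  set i0 := cl v with hi0
  set I : Finset (Fin r) := if a i0 = 0 then {i0} else univ with hI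
  set b : Fin r → Fin r → ℕ := fun i => if i = i0 then a else
    Function.update (Function.update a i (a i + 1)) i0 (a i0 - 1) with hb
  have hcard : (H.filter (fun e => v ∈ e ∧ Disjoint e W)).card
      = ((H.filter (fun e => v ∈ e ∧ Disjoint e W)).image (fun e => e.erase v)).card := by
    rw [card_image_of_injOn]
    intro e he f hf h
    simp only [coe_filter, Set.mem_ofPred_eq] at he hf
    have h : e.erase v = f.erase v := h
    rw [← insert_erase he.2.1, ← insert_erase hf.2.1, h]
  rw [hcard]
  have h1 := dm_deg_types cl I b ((H.filter (fun e => v ∈ e ∧ Disjoint e W)).image (fun e => e.erase v)) (by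
    intro T hT
    obtain ⟨e, he, rfl⟩ := mem_image.1 hT
    simp only [mem_filter] at he
    obtain ⟨heH, hve, heW⟩ := he
    have ht := fun j => (dm_erase_filter cl e v hve j).trans (hE e heH heW j)
    refine ⟨c e, ?_, ?_⟩
    · rw [hI]
      split_ifs with h0
      · have := ht i0
        rw [← hi0, if_pos rfl, h0] at this
        by_cases hc : c e = i0
        · simp [hc]
        · rw [if_neg hc] at this; omega
      · simp
    · intro j
      have := ht j
      rw [← hi0] at this
      simp only [hb]
      split_ifs with hc
      · rw [hc] at this; omega
      · by_cases hj : j = i0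
        · subst hj
          rw [Function.update_self]
          rw [if_pos rfl, if_neg hc] at this
          omega
        · rw [Function.update_of_ne hj]
          rw [if_neg (Ne.symm hj)] at this
          by_cases hj2 : j = c e
          · subst hj2; rw [Function.update_self]; simpa using this
          · rw [Function.update_of_ne hj2]
            rw [if_neg (Ne.symm hj2)] at this
            simpa using this)
  refine h1.trans (le_of_eq ?_)
  by_cases h0 : a i0 = 0
  · simp only [hI, h0, if_true, sum_singleton, hb]
    simp
  · simp only [hI, h0, if_false]
    rw [← Finset.add_sum_erase univ _ (mem_univ i0)]
    simp only [hb, if_true]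
    congr 1
    refine Finset.sum_congr rfl fun i hi => ?_
    rw [if_neg (ne_of_mem_erase hi)]

lemma dm_plus_bound {V : Type*} [Fintype V] [DecidableEq V] {k r : ℕ} (hk : 3 ≤ k) (hr : 2 ≤ r)
    (H : Finset (Finset V)) (W : Finset V) (c : Finset V → Fin r) (cl : V → Fin r) (a : Fin r → ℕ)
    (ha : ∑ j, a j = k - 1) (s : ℝ) (hs : 0 ≤ s) (hn : ∀ j, dmn cl j ≤ s * dmp k r a j)
    (hE : ∀ e ∈ H, Disjoint e W → ∀ j, (e.filter (fun v => cl v = j)).card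
      = a j + if c e = j then 1 else 0) :
    ∃ i0 : Fin r, ∀ v, cl v = i0 →
      ((H.filter (fun e => v ∈ e ∧ Disjoint e W)).card : ℝ) ≤
        s ^ (k-1) / ((k-1).factorial : ℝ) * gThr k r := by
  obtain ⟨i0, hi0⟩ := dm_g k r hk hr a ha
  refine ⟨i0, ?_⟩
  intro v hv
  have h1 := dm_plus_deg H W c cl a v hE
  rw [hv] at h1
  have hmono : ∀ b : Fin r → ℕ, ∑ j, b j = k - 1 → dmw (dmn cl) b ≤ s ^ (k-1) * dmw (dmp k r a) b := by
    intro b hb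
    rw [← hb, ← dmw_scale]
    exact dmw_mono _ _ (dmn_nonneg cl) hn b
  have h2 : dmw (dmn cl) a + ∑ i ∈ univ.erase i0, (if a i0 = 0 then 0 else
        dmw (dmn cl) (Function.update (Function.update a i (a i + 1)) i0 (a i0 - 1)))
      ≤ s^(k-1) * (dmw (dmp k r a) a + ∑ i ∈ univ.erase i0,
      (if a i0 = 0 then 0 else
        dmw (dmp k r a) (Function.update (Function.update a i (a i + 1)) i0 (a i0 - 1)))) := by
    rw [mul_add, Finset.mul_sum]
    apply add_le_add (hmono a ha)
    apply Finset.sum_le_sum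
    intro i hi
    split_ifs with h0
    · simp
    · apply hmono
      have e1 := dm_sum_update a i (a i + 1)
      have e2 := dm_sum_update (Function.update a i (a i + 1)) i0 (a i0 - 1)
      rw [Function.update_of_ne (ne_of_mem_erase hi).symm] at e2
      omega
  refine (h1.trans h2).trans ?_
  rw [div_mul_eq_mul_div, mul_div_assoc]
  apply mul_le_mul_of_nonneg_left _ (pow_nonneg hs _)
  rw [le_div_iff₀ (by positivity)]
  linarith

def dmN {V : Type*} [DecidableEq V] (H : Finset (Finset V)) (W : Finset V) (v : V) :
    Finset (Finset V) := (H.filter (fun e => v ∈ e ∧ Disjoint e W)).image (fun e => e.erase v)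

lemma dmN_card {V : Type*} [DecidableEq V] (H : Finset (Finset V)) (W : Finset V) (v : V) :
    (dmN H W v).card = (H.filter (fun e => v ∈ e ∧ Disjoint e W)).card := by
  unfold dmN
  rw [card_image_of_injOn]
  intro e he f hf h
  simp only [coe_filter, Set.mem_ofPred_eq] at he hf
  have h : e.erase v = f.erase v := h
  rw [← insert_erase he.2.1, ← insert_erase hf.2.1, h]

lemma dmN_mem {V : Type*} [DecidableEq V] {r k : ℕ} {H : Finset (Finset V)} (hH : HyperUniform k H)
    {W : Finset V} {c : Finset V → Fin r} {cl : V → Fin r} {a : Fin r → ℕ}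
    (hE : ∀ e ∈ H, Disjoint e W → ∀ j, (e.filter (fun v => cl v = j)).card
      + (if c e = j then 1 else 0) = a j) {v : V} {T : Finset V} (hT : T ∈ dmN H W v) :
    T.card = k - 1 ∧ ∃ i, ∀ j, (T.filter (fun v => cl v = j)).card + (if cl v = j then 1 else 0)
      + (if i = j then 1 else 0) = a j := by
  obtain ⟨e, he, rfl⟩ := mem_image.1 hT
  simp only [mem_filter] at he
  obtain ⟨heH, hve, heW⟩ := he
  refine ⟨by rw [card_erase_of_mem hve, hH e heH], c e, ?_⟩
  intro j
  rw [dm_erase_filter cl e v hve j]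
  exact hE e heH heW j

lemma dm_minus_one {V : Type*} [Fintype V] [DecidableEq V] {r k : ℕ} {H : Finset (Finset V)}
    (hH : HyperUniform k H)
    {W : Finset V} {c : Finset V → Fin r} {cl : V → Fin r} {a : Fin r → ℕ}
    (hE : ∀ e ∈ H, Disjoint e W → ∀ j, (e.filter (fun v => cl v = j)).card
      + (if c e = j then 1 else 0) = a j) (v : V) (hv : a (cl v) = 1) :
    ((H.filter (fun e => v ∈ e ∧ Disjoint e W)).card : ℝ) ≤
      ((Fintype.card V : ℝ) - dmn cl (cl v)) ^ (k-1) / ((k-1).factorial : ℝ) := by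
  rw [← dmN_card]
  have h1 : dmN H W v ⊆ powersetCard (k-1) (univ.filter (fun u => cl u = cl v))ᶜ := by
    intro T hT
    obtain ⟨hc, i, hi⟩ := dmN_mem hH hE hT
    rw [mem_powersetCard]
    refine ⟨?_, hc⟩
    intro u hu
    simp only [mem_compl, mem_filter, mem_univ, true_and]
    intro hcl
    have := hi (cl v)
    rw [if_pos rfl, hv] at this
    have h0 : (T.filter (fun u => cl u = cl v)).card = 0 := by omega
    rw [card_eq_zero] at h0
    have : u ∈ T.filter (fun u => cl u = cl v) := mem_filter.2 ⟨hu, hcl⟩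
    rw [h0] at this
    simp at this
  have h2 := card_le_card h1
  rw [card_powersetCard] at h2
  have h3 : (((univ.filter (fun u => cl u = cl v))ᶜ.card : ℕ) : ℝ) = (Fintype.card V : ℝ) - dmn cl (cl v) := by
    rw [card_compl, Nat.cast_sub (card_le_univ _)]
    rfl
  rw [← h3]
  refine le_trans (by exact_mod_cast h2) (Nat.choose_le_pow_div _ _)

lemma dmw_downx {r : ℕ} (y : Fin r → ℝ) (hy : ∀ j, 0 < y j) (a : Fin r → ℕ) (i : Fin r) (x : ℕ)
    (hx : x ≤ a i) :
    dmw y (Function.update a i (a i - x)) = dmw y a * (((a i).descFactorial x : ℝ) / y i ^ x) := by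
  have h := dm_prod_update (fun j b => y j ^ b / (b.factorial : ℝ)) a i (a i - x)
  have hyi := hy i
  have h1 : y i ^ (a i - x) / ((a i - x).factorial : ℝ)
      = (((a i).descFactorial x : ℝ) / y i ^ x) * (y i ^ a i / ((a i).factorial : ℝ)) := by
    have e1 := Nat.factorial_mul_descFactorial hx
    have e2 : y i ^ (a i) = y i ^ (a i - x) * y i ^ x := by
      rw [← pow_add, Nat.sub_add_cancel hx]
    rw [e2, ← e1]
    push_cast
    have : ((a i).descFactorial x : ℝ) ≠ 0 := by
      have := Nat.pow_sub_lt_descFactorial (n := a i) (k := x)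
      rw [Nat.cast_ne_zero, Ne, Nat.descFactorial_eq_zero_iff_lt]; omega
    field_simp
  simp only [h1] at h
  have h4 : y i ^ a i / ((a i).factorial : ℝ) ≠ 0 := by positivity
  rw [← mul_assoc] at h
  exact mul_right_cancel₀ h4 h

def dm3 {r : ℕ} (a : Fin r → ℕ) (i1 i2 i3 : Fin r) (x : ℕ × ℕ × ℕ) : Fin r → ℕ :=
  Function.update (Function.update (Function.update a i1 (a i1 - x.1)) i2 (a i2 - x.2.1)) i3 (a i3 - x.2.2)

lemma dm3_w {r : ℕ} (y : Fin r → ℝ) (hy : ∀ j, 0 < y j) (a : Fin r → ℕ) (ha : ∀ j, 2 ≤ a j)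
    (i1 i2 i3 : Fin r) (h12 : i1 ≠ i2) (h13 : i1 ≠ i3) (h23 : i2 ≠ i3) (x : ℕ × ℕ × ℕ)
    (hx : x.1 ≤ 2 ∧ x.2.1 ≤ 2 ∧ x.2.2 ≤ 2) :
    dmw y (dm3 a i1 i2 i3 x) = dmw y a * (((a i1).descFactorial x.1 : ℝ) / y i1 ^ x.1)
      * (((a i2).descFactorial x.2.1 : ℝ) / y i2 ^ x.2.1)
      * (((a i3).descFactorial x.2.2 : ℝ) / y i3 ^ x.2.2) ∧
    ∑ j, dm3 a i1 i2 i3 x j + (x.1 + x.2.1 + x.2.2) = ∑ j, a j := by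
  have g1 := ha i1
  have g2 := ha i2
  have g3 := ha i3
  have e1 := dmw_downx y hy a i1 x.1 (by omega)
  have s1 := dm_sum_update a i1 (a i1 - x.1)
  set a1 := Function.update a i1 (a i1 - x.1) with ha1
  have q2 : a1 i2 = a i2 := by rw [ha1, Function.update_of_ne h12.symm]
  have q3 : a1 i3 = a i3 := by rw [ha1, Function.update_of_ne h13.symm]
  have e2 := dmw_downx y hy a1 i2 x.2.1 (by omega)
  have s2 := dm_sum_update a1 i2 (a i2 - x.2.1)
  rw [q2] at e2 s2
  set a2 := Function.update a1 i2 (a i2 - x.2.1) with ha2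
  have q3' : a2 i3 = a i3 := by rw [ha2, Function.update_of_ne h23.symm, q3]
  have e3 := dmw_downx y hy a2 i3 x.2.2 (by omega)
  have s3 := dm_sum_update a2 i3 (a i3 - x.2.2)
  rw [q3'] at e3 s3
  constructor
  · unfold dm3
    rw [← ha1, ← ha2, e3, e2, e1]
  · unfold dm3
    rw [← ha1, ← ha2]
    omega

lemma dm3_app {r : ℕ} (a : Fin r → ℕ) 
    (i1 i2 i3 : Fin r) (h12 : i1 ≠ i2) (h13 : i1 ≠ i3) (h23 : i2 ≠ i3) (x : ℕ × ℕ × ℕ) (j : Fin r) :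
    dm3 a i1 i2 i3 x j = a j - (if i1 = j then x.1 else 0) - (if i2 = j then x.2.1 else 0)
       - (if i3 = j then x.2.2 else 0) := by
  unfold dm3
  by_cases h3 : i3 = j
  · subst h3; simp [h13, h23]
  · by_cases h2 : i2 = j
    · subst h2; simp [h3, h12, Function.update_of_ne (Ne.symm h3)]
    · by_cases h1 : i1 = j
      · subst h1; simp [h3, h2, Function.update_of_ne (Ne.symm h3), Function.update_of_ne (Ne.symm h2)]
      · simp [h1, h3, h2, Function.update_of_ne (Ne.symm h3), Function.update_of_ne (Ne.symm h2), Function.update_of_ne (Ne.symm h1)]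

lemma dm_inter {V : Type*} [Fintype V] [DecidableEq V] {r k : ℕ} {H : Finset (Finset V)}
    (hH : HyperUniform k H)
    {W : Finset V} {c : Finset V → Fin r} {cl : V → Fin r} {a : Fin r → ℕ}
    (hE : ∀ e ∈ H, Disjoint e W → ∀ j, (e.filter (fun v => cl v = j)).card
      + (if c e = j then 1 else 0) = a j) (u v : V) (huv : cl u ≠ cl v) (b : Fin r → ℕ)
    (hb : ∀ j, b j = a j - (if cl u = j then 1 else 0) - (if cl v = j then 1 else 0)) :
    ((dmN H W u ∩ dmN H W v).card : ℝ) ≤ dmw (dmn cl) b := by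
  apply dm_type_count
  intro T hT j
  rw [mem_inter] at hT
  obtain ⟨-, i, hi⟩ := dmN_mem hH hE hT.1
  obtain ⟨-, i', hi'⟩ := dmN_mem hH hE hT.2
  have hiv : i = cl v := by
    by_contra hne
    have h1 := hi (cl v)
    have h2 := hi' (cl v)
    rw [if_neg huv, if_neg hne] at h1
    rw [if_pos rfl] at h2
    omega
  have := hi j
  rw [hiv] at this
  rw [hb j]
  omega

lemma dm_three_card {α : Type*} [DecidableEq α] (A B C : Finset α) :
    A.card + B.card + C.card ≤ (A ∪ B ∪ C).card + (A ∩ B).card + (A ∩ C).card + (B ∩ C).card := by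
  have h1 := card_union_add_card_inter A B
  have h2 := card_union_add_card_inter (A ∪ B) C
  have h3 : ((A ∪ B) ∩ C).card ≤ (A ∩ C).card + (B ∩ C).card := by
    rw [union_inter_distrib_right]; exact card_union_le _ _
  omega

lemma dm_minus_three {V : Type*} [Fintype V] [DecidableEq V] {r k : ℕ} {H : Finset (Finset V)}
    (hH : HyperUniform k H)
    {W : Finset V} {c : Finset V → Fin r} {cl : V → Fin r} {a : Fin r → ℕ}
    (hE : ∀ e ∈ H, Disjoint e W → ∀ j, (e.filter (fun v => cl v = j)).card
      + (if c e = j then 1 else 0) = a j) (ha : ∀ j, 2 ≤ a j) (hsum : ∑ j, a j = k + 1)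
    (hne : ∀ j, 0 < dmn cl j) (u v w : V) (huv : cl u ≠ cl v) (huw : cl u ≠ cl w) (hvw : cl v ≠ cl w) :
    ((H.filter (fun e => u ∈ e ∧ Disjoint e W)).card : ℝ)
     + ((H.filter (fun e => v ∈ e ∧ Disjoint e W)).card : ℝ)
     + ((H.filter (fun e => w ∈ e ∧ Disjoint e W)).card : ℝ) ≤
      5/3 * ((Fintype.card V : ℝ) ^ (k-1) / ((k-1).factorial : ℝ)) := by
  rw [← dmN_card, ← dmN_card, ← dmN_card]
  set Z := (Fintype.card V : ℝ) ^ (k-1) / ((k-1).factorial : ℝ) with hZ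
  have hcards := dm_three_card (dmN H W u) (dmN H W v) (dmN H W w)
  have hU : (((dmN H W u) ∪ (dmN H W v) ∪ (dmN H W w)).card : ℝ) ≤ Z := by
    have : (dmN H W u) ∪ (dmN H W v) ∪ (dmN H W w) ⊆ powersetCard (k-1) univ := by
      intro T hT
      rw [mem_powersetCard]
      refine ⟨subset_univ _, ?_⟩
      rcases mem_union.1 hT with h | h
      · rcases mem_union.1 h with h | h
        · exact (dmN_mem hH hE h).1
        · exact (dmN_mem hH hE h).1
      · exact (dmN_mem hH hE h).1
    have h2 := card_le_card this
    rw [card_powersetCard, card_univ] at h2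
    exact le_trans (by exact_mod_cast h2) (Nat.choose_le_pow_div _ _)
  set F := dm3 a (cl u) (cl v) (cl w) with hF
  have happ := dm3_app a (cl u) (cl v) (cl w) huv huw hvw
  have i1 := dm_inter hH hE u v huv (F (1,1,0)) (by intro j; rw [hF, happ]; simp)
  have i2 := dm_inter hH hE u w huw (F (1,0,1)) (by intro j; rw [hF, happ]; simp)
  have i3 := dm_inter hH hE v w hvw (F (0,1,1)) (by intro j; rw [hF, happ]; simp)
  set X : Finset (ℕ × ℕ × ℕ) := {(1,1,0),(1,0,1),(0,1,1),(2,0,0),(0,2,0),(0,0,2)} with hX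
  have hX2 : ∀ x ∈ X, x.1 ≤ 2 ∧ x.2.1 ≤ 2 ∧ x.2.2 ≤ 2 ∧ x.1 + x.2.1 + x.2.2 = 2 := by
    rw [hX]; decide
  have hw := fun x hx => dm3_w (dmn cl) hne a ha (cl u) (cl v) (cl w) huv huw hvw x hx
  have hinj : Set.InjOn F (X : Set (ℕ × ℕ × ℕ)) := by
    intro x hx y hy hxy
    have hx := hX2 x hx
    have hy := hX2 y hy
    have f1 := congrFun hxy (cl u)
    have f2 := congrFun hxy (cl v)
    have f3 := congrFun hxy (cl w)
    rw [hF, happ, happ] at f1 f2 f3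
    simp only [if_true, if_neg huv, if_neg huw, if_neg hvw, if_neg huv.symm, if_neg huw.symm, if_neg hvw.symm] at f1 f2 f3
    have g1 := ha (cl u)
    have g2 := ha (cl v)
    have g3 := ha (cl w)
    ext <;> omega
  have hm := dm_multi (dmn cl) (dmn_nonneg cl) (k-1) (X.image F) (by
    intro b hb
    obtain ⟨x, hx, rfl⟩ := mem_image.1 hb
    have h2 := hX2 x hx
    have := (hw x ⟨h2.1, h2.2.1, h2.2.2.1⟩).2
    rw [hF]; omega)
  rw [dmn_sum, ← hZ, Finset.sum_image hinj, hX] at hm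
  rw [Finset.sum_insert (by decide), Finset.sum_insert (by decide), Finset.sum_insert (by decide),
    Finset.sum_insert (by decide), Finset.sum_insert (by decide), Finset.sum_singleton] at hm
  have w1 := (hw (1,1,0) (by simp)).1
  have w2 := (hw (1,0,1) (by simp)).1
  have w3 := (hw (0,1,1) (by simp)).1
  have w4 := (hw (2,0,0) (by simp)).1
  have w5 := (hw (0,2,0) (by simp)).1
  have w6 := (hw (0,0,2) (by simp)).1
  have hgen : ∀ j, ((a j).descFactorial 2 : ℝ) / dmn cl j ^ 2 ≥ ((a j : ℝ) / dmn cl j)^2 / 2 := by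
    intro j
    rw [div_pow, ge_iff_le, div_right_comm]
    apply div_le_div_of_nonneg_right _ (by positivity)
    have : (a j).descFactorial 2 = (a j - 1) * a j := by simp [Nat.descFactorial]
    have h2 := ha j
    rw [this, Nat.cast_mul, Nat.cast_sub (by omega)]
    have : (2:ℝ) ≤ a j := by exact_mod_cast h2
    push_cast
    nlinarith
  have k1 := hgen (cl u)
  have k2 := hgen (cl v)
  have k3 := hgen (cl w)
  simp only [Nat.descFactorial_zero, Nat.descFactorial_one, pow_zero, pow_one, Nat.cast_one, div_one, mul_one] at w1 w2 w3 w4 w5 w6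
  set p := (a (cl u) : ℝ) / dmn cl (cl u)
  set q := (a (cl v) : ℝ) / dmn cl (cl v)
  set s := (a (cl w) : ℝ) / dmn cl (cl w)
  have hg := dmw_nonneg (dmn cl) (dmn_nonneg cl) a
  set g := dmw (dmn cl) a
  rw [← hF] at w1 w2 w3 w4 w5 w6
  have m4 := mul_le_mul_of_nonneg_left k1 hg
  have m5 := mul_le_mul_of_nonneg_left k2 hg
  have m6 := mul_le_mul_of_nonneg_left k3 hg
  have m7 : 0 ≤ g * ((p-q)^2 + (q-s)^2 + (p-s)^2) := by positivity
  have hc : ((dmN H W u).card : ℝ) + (dmN H W v).card + (dmN H W w).card ≤ 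
     ((dmN H W u ∪ dmN H W v ∪ dmN H W w).card : ℝ) + (dmN H W u ∩ dmN H W v).card + (dmN H W u ∩ dmN H W w).card
       + (dmN H W v ∩ dmN H W w).card := by exact_mod_cast hcards
  rw [w1] at i1 hm
  rw [w2] at i2 hm
  rw [w3] at i3 hm
  rw [w4, w5, w6] at hm
  nlinarith

lemma dm_bad {V : Type*} [Fintype V] [DecidableEq V] {H M : Finset (Finset V)}
    (hM : IsPM H M) (W : Finset V) : (M.filter (fun e => ¬ Disjoint e W)).card ≤ W.card := by
  calc (M.filter (fun e => ¬ Disjoint e W)).card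
      = ∑ e ∈ M.filter (fun e => ¬ Disjoint e W), 1 := by simp
    _ ≤ ∑ e ∈ M.filter (fun e => ¬ Disjoint e W), (e ∩ W).card := by
        apply sum_le_sum
        intro e he
        rw [mem_filter, not_disjoint_iff_nonempty_inter] at he
        exact card_pos.2 he.2
    _ = ((M.filter (fun e => ¬ Disjoint e W)).biUnion (fun e => e ∩ W)).card := by
        rw [card_biUnion]
        intro e he f hf hne
        exact (hM.2.1 e (mem_filter.1 he).1 f (mem_filter.1 hf).1 hne).mono inter_subset_left inter_subset_left
    _ ≤ W.card := by
        apply card_le_card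
        intro v hv
        obtain ⟨e, _, h⟩ := mem_biUnion.1 hv
        exact (mem_inter.1 h).2

lemma dm_good {V : Type*} [Fintype V] [DecidableEq V] {r : ℕ} {H M : Finset (Finset V)}
    (hM : IsPM H M) (W : Finset V) (c : Finset V → Fin r) (i : Fin r)
    (h : W.card < (M.filter (fun e => c e = i)).card) : ∃ e ∈ H, c e = i ∧ Disjoint e W := by
  by_contra hcon
  push Not at hcon
  have : M.filter (fun e => c e = i) ⊆ M.filter (fun e => ¬ Disjoint e W) := by
    intro e he
    rw [mem_filter] at he ⊢
    exact ⟨he.1, hcon e (hM.1 he.1) he.2⟩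
  have := card_le_card this
  have := dm_bad hM W
  omega

lemma dm_class {V : Type*} [Fintype V] [DecidableEq V] {r : ℕ} {H M : Finset (Finset V)}
    (hM : IsPM H M) (cl : V → Fin r) (j : Fin r) :
    dmn cl j = ∑ e ∈ M, ((e.filter (fun v => cl v = j)).card : ℝ) := by
  unfold dmn
  have : univ.filter (fun v => cl v = j) = M.biUnion (fun e => e.filter (fun v => cl v = j)) := by
    ext v
    obtain ⟨e, he, hv⟩ := hM.2.2 v
    simp only [mem_filter, mem_univ, true_and, mem_biUnion]
    constructor
    · intro h; exact ⟨e, he, hv, h⟩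
    · rintro ⟨_, _, _, h⟩; exact h
  rw [this, card_biUnion]
  · push_cast; rfl
  · intro e he f hf hne
    exact (hM.2.1 e he f hf hne).mono (filter_subset _ _) (filter_subset _ _)

lemma dm_class_plus {V : Type*} [Fintype V] [DecidableEq V] {r k : ℕ} {H M : Finset (Finset V)}
    (hH : HyperUniform k H) (hM : IsPM H M) (W : Finset V) (c : Finset V → Fin r)
    (cl : V → Fin r) (a : Fin r → ℕ)
    (hE : ∀ e ∈ H, Disjoint e W → ∀ j, (e.filter (fun v => cl v = j)).card
      = a j + if c e = j then 1 else 0) (j : Fin r) :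
    dmn cl j ≤ a j * M.card + (M.filter (fun e => c e = j)).card + k * W.card := by
  rw [dm_class hM]
  have hb : ((M.filter (fun e => ¬ Disjoint e W)).card : ℝ) ≤ W.card := by exact_mod_cast dm_bad hM W
  calc ∑ e ∈ M, ((e.filter (fun v => cl v = j)).card : ℝ)
      ≤ ∑ e ∈ M, ((a j : ℝ) + (if c e = j then 1 else 0) + (if ¬ Disjoint e W then (k:ℝ) else 0)) := by
        apply sum_le_sum
        intro e he
        by_cases hd : Disjoint e W
        · have := hE e (hM.1 he) hd j
          rw [this]
          simp [hd]
        · have h1 : (e.filter (fun v => cl v = j)).card ≤ k := by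
            rw [← hH e (hM.1 he)]; exact card_filter_le _ _
          have h2 : ((e.filter (fun v => cl v = j)).card : ℝ) ≤ k := by exact_mod_cast h1
          rw [if_pos hd]
          have : (0:ℝ) ≤ if c e = j then 1 else 0 := by split_ifs <;> norm_num
          have : (0:ℝ) ≤ a j := by positivity
          linarith
    _ = a j * M.card + (M.filter (fun e => c e = j)).card + k * (M.filter (fun e => ¬ Disjoint e W)).card := by
        rw [sum_add_distrib, sum_add_distrib, sum_const, ← sum_filter, ← sum_filter, sum_const, sum_const]
        simp only [nsmul_eq_mul, mul_one]
        ring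
    _ ≤ _ := by gcongr

lemma dm_class_minus {V : Type*} [Fintype V] [DecidableEq V] {r : ℕ} {H M : Finset (Finset V)}
    (hM : IsPM H M) (W : Finset V) (c : Finset V → Fin r)
    (cl : V → Fin r) (a : Fin r → ℕ)
    (hE : ∀ e ∈ H, Disjoint e W → ∀ j, (e.filter (fun v => cl v = j)).card
      + (if c e = j then 1 else 0) = a j) (j : Fin r) (ha : a j = 1) :
    (M.card : ℝ) - (M.filter (fun e => c e = j)).card - W.card ≤ dmn cl j := by
  rw [dm_class hM]
  have hb : ((M.filter (fun e => ¬ Disjoint e W)).card : ℝ) ≤ W.card := by exact_mod_cast dm_bad hM W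
  have h1 : ∑ e ∈ M, (1:ℝ) ≤ ∑ e ∈ M, (((e.filter (fun v => cl v = j)).card : ℝ)
      + (if c e = j then 1 else 0) + (if ¬ Disjoint e W then 1 else 0)) := by
    apply sum_le_sum
    intro e he
    by_cases hd : Disjoint e W
    · have := hE e (hM.1 he) hd j
      rw [ha] at this
      have h2 : ((e.filter (fun v => cl v = j)).card : ℝ) + (if c e = j then 1 else 0) = 1 := by
        exact_mod_cast this
      rw [h2]; simp [hd]
    · rw [if_pos hd]
      have : (0:ℝ) ≤ if c e = j then 1 else 0 := by split_ifs <;> norm_num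
      have : (0:ℝ) ≤ (e.filter (fun v => cl v = j)).card := by positivity
      linarith
  rw [sum_add_distrib, sum_add_distrib, ← sum_filter, ← sum_filter, sum_const, sum_const, sum_const] at h1
  simp only [nsmul_eq_mul, mul_one] at h1
  linarith

lemma dm_deg_after {n k : ℕ} (hk : 3 ≤ k) (hn : k ≤ n) (H : Finset (Finset (Fin n)))
    (hH : HyperUniform k H) (v : Fin n) (S : Finset (Fin n)) (D β : ℝ)
    (hD : D * ((n-1).choose (k-1) : ℝ) < hdeg H v) (hS : (S.card : ℝ) ≤ β * n) :
    (D - 2 * k * β) * ((n-1).choose (k-1) : ℝ) <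
      ((H.filter (fun e => v ∈ e ∧ Disjoint (e.erase v) S)).card : ℝ) := by
  have h1 := dm_deg_avoid H hH v S
  rw [Fintype.card_fin] at h1
  have h1' : (hdeg H v : ℝ) ≤ ((H.filter (fun e => v ∈ e ∧ Disjoint (e.erase v) S)).card : ℝ)
      + S.card * ((n-2).choose (k-2) : ℝ) := by exact_mod_cast h1
  have h2 := dm_choose_two n k hk hn
  have hn0 : (0:ℝ) < n := by
    have : 0 < n := by omega
    exact_mod_cast this
  have h3 : (S.card : ℝ) * ((n-2).choose (k-2) : ℝ) ≤ 2 * k * β * ((n-1).choose (k-1) : ℝ) := by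
    calc (S.card : ℝ) * ((n-2).choose (k-2) : ℝ) ≤ (β * n) * (2*k/n * ((n-1).choose (k-1):ℝ)) := by
          apply mul_le_mul hS h2 (by positivity)
          exact le_trans (by positivity) hS
      _ = _ := by field_simp
  linarith

lemma dm_caseA {n k r : ℕ} (hk : 3 ≤ k) (hn : k ≤ n) (hkn : k ∣ n) (H : Finset (Finset (Fin n)))
    (hH : HyperUniform k H) (c : Finset (Fin n) → Fin r) (i : Fin r)
    (F : Finset (Finset (Finset (Fin n)) × Finset (Finset (Fin n))))
    (hF : ∀ p ∈ F, DmGadget k H c i p)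
    (hd : ∀ p ∈ F, ∀ q ∈ F, p ≠ q → Disjoint (p.1.biUnion id) (q.1.biUnion id))
    (D β : ℝ) (hD : ∀ v, D * ((n-1).choose (k-1) : ℝ) < hdeg H v)
    (hS : ((F.biUnion (fun p => p.1.biUnion id)).card : ℝ) ≤ β * n) (hβ : β ≤ 1/2)
    (hDβ : 0 ≤ D - 2 * k * β)
    (hpm : ∀ m, m ≤ n → n ≤ 2 * m → k ∣ m → ∀ H' : Finset (Finset (Fin m)), HyperUniform k H' →
      (∀ v, (D - 2 * k * β) * ((m-1).choose (k-1) : ℝ) ≤ hdeg H' v) → ∃ M, IsPM H' M) :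
    ∃ MA MB, IsPM H MA ∧ IsPM H MB ∧
      (MA.filter (fun e => c e = i)).card + F.card ≤ (MB.filter (fun e => c e = i)).card := by
  set S := F.biUnion (fun p => p.1.biUnion id) with hSdef
  have hkS : k ∣ S.card := by
    rw [hSdef, card_biUnion hd]
    apply dvd_sum
    intro p hp
    rw [dm_mat_card hH (hF p hp).1]
    exact dvd_mul_left _ _
  have hSn : S.card ≤ n := by
    have := card_le_univ S
    simpa using this
  have hcompl : Sᶜ.card = n - S.card := by rw [card_compl, Fintype.card_fin]
  have h2 : n ≤ 2 * (n - S.card) := by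
    have : (S.card : ℝ) * 2 ≤ n := by nlinarith [(Nat.cast_nonneg n : (0:ℝ) ≤ n)]
    have : S.card * 2 ≤ n := by exact_mod_cast this
    omega
  obtain ⟨M0, hM0, hM0d, hcov⟩ := dm_transfer k n H hH S (n - S.card) hcompl
    ((D - 2 * k * β) * ((n - S.card - 1).choose (k-1) : ℝ))
    (fun H' hH' hv => hpm (n - S.card) (by omega) h2 (Nat.dvd_sub hkn hkS) H' hH' hv)
    (by
      intro v hv
      refine le_trans ?_ (dm_deg_after hk hn H hH v S D β (hD v) hS).le
      apply mul_le_mul_of_nonneg_left _ hDβ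
      have : (n - S.card - 1).choose (k-1) ≤ (n-1).choose (k-1) := Nat.choose_le_choose _ (by omega)
      exact_mod_cast this)
  exact dm_switch (by omega) H hH c i F hF hd M0 hM0 hM0d hcov

lemma dm_type_sum {V : Type*} [DecidableEq V] {r : ℕ} (cl : V → Fin r) (e : Finset V) :
    ∑ j, (e.filter (fun v => cl v = j)).card = e.card := by
  rw [← card_eq_sum_card_fiberwise (f := cl) (t := univ)]
  intro e _; simp

lemma dm_caseB {n k r : ℕ} (hk : 3 ≤ k) (hr : 2 ≤ r) (hn : k ≤ n) (H : Finset (Finset (Fin n)))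
    (hH : HyperUniform k H) (c : Finset (Fin n) → Fin r) (W : Finset (Fin n))
    (hNG : DmNG k H W c) (hCN : DmCN k H W) (M : Finset (Finset (Fin n))) (hM : IsPM H M)
    (P η ω θ ε : ℝ) (hη : 0 < η) (hP : 5/9 ≤ P) (hP1 : P ≤ 1) (hgP : gThr k r ≤ P)
    (hD : ∀ v, (P + η) * ((n-1).choose (k-1) : ℝ) < hdeg H v)
    (hω0 : 0 ≤ ω) (hθ0 : 0 ≤ θ) (hε0 : 0 ≤ ε)
    (hW : (W.card : ℝ) ≤ ω * n) (hω : 2 * k * ω ≤ η / 2)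
    (hx : ∀ j, ((M.filter (fun e => c e = j)).card : ℝ) ≤ (n:ℝ) / (r * k) * (1 + θ))
    (hωθ : ω < (1 - (r-1) * θ) / (r * k))
    (hmain : (1 + (θ + r * k^2 * ω)) ^ (k-1) * (1 + ε) ≤ 1 + η / 2)
    (hZ : (n:ℝ)^(k-1) / ((k-1).factorial : ℝ) ≤ (1 + ε) * ((n-1).choose (k-1) : ℝ)) : False := by
  have hkR : (0:ℝ) < k := by
    have : 0 < k := by omega
    exact_mod_cast this
  have hrR : (0:ℝ) < r := by
    have : 0 < r := by omega
    exact_mod_cast this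
  have hnR : (0:ℝ) < n := by
    have : 0 < n := by omega
    exact_mod_cast this
  have hr2 : (2:ℝ) ≤ r := by exact_mod_cast hr
  have hk3 : (3:ℝ) ≤ k := by exact_mod_cast hk
  set Cn : ℝ := ((n-1).choose (k-1) : ℝ) with hCn
  have hCpos : 0 < Cn := by
    rw [hCn]
    have : 0 < (n-1).choose (k-1) := Nat.choose_pos (by omega)
    exact_mod_cast this
  have hMc : (M.card : ℝ) = n / k := by
    have := dm_pm_card hH hM
    rw [Fintype.card_fin] at this
    rw [eq_div_iff hkR.ne']
    exact_mod_cast this.symm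
  set Z := (n:ℝ)^(k-1) / ((k-1).factorial : ℝ) with hZdef
  set lam := θ + r * k^2 * ω with hlam
  have hlam0 : 0 ≤ lam := by positivity
  have hg0 : 0 ≤ gThr k r := le_trans (by positivity) (dm_g0 k r hk hr)
  have hlow : ∀ v, v ∉ W → (P + η/2) * Cn < ((H.filter (fun e => v ∈ e ∧ Disjoint e W)).card : ℝ) := by
    intro v hv
    have h1 := dm_deg_after hk hn H hH v W (P+η) ω (hD v) hW
    have h2 : H.filter (fun e => v ∈ e ∧ Disjoint (e.erase v) W) = H.filter (fun e => v ∈ e ∧ Disjoint e W) := by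
      apply filter_congr
      intro e he
      constructor
      · rintro ⟨h, h'⟩
        refine ⟨h, ?_⟩
        rw [← insert_erase h, disjoint_insert_left]
        exact ⟨hv, h'⟩
      · rintro ⟨h, h'⟩
        exact ⟨h, disjoint_of_subset_left (erase_subset _ _) h'⟩
    rw [h2] at h1
    refine lt_of_le_of_lt ?_ h1
    apply mul_le_mul_of_nonneg_right _ hCpos.le
    linarith
  have hgood : ∀ i, ∃ e ∈ H, c e = i ∧ Disjoint e W := by
    intro i
    apply dm_good hM
    have h1 := dm_cnt_lower c M i _ hx
    have h2 : ω * n < (M.card : ℝ) - (r - 1) * ((n:ℝ) / (r * k) * (1 + θ)) := by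
      rw [hMc]
      have : (n:ℝ)/k - (r - 1) * ((n:ℝ) / (r * k) * (1 + θ)) = (1 - (r-1) * θ) / (r * k) * n := by
        field_simp; ring
      rw [this]
      exact mul_lt_mul_of_pos_right hωθ hnR
    have h3 : (W.card : ℝ) < ((M.filter (fun e => c e = i)).card : ℝ) := by linarith
    exact_mod_cast h3
  have hfinal : (1 + lam)^(k-1) * Z * gThr k r ≤ (P + η/2) * Cn := by
    have h1 : (1+lam)^(k-1) * Z ≤ (1 + η/2) * Cn := by
      calc (1+lam)^(k-1) * Z ≤ (1+lam)^(k-1) * ((1+ε) * Cn) := by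
            apply mul_le_mul_of_nonneg_left hZ (by positivity)
        _ = ((1+lam)^(k-1) * (1+ε)) * Cn := by ring
        _ ≤ _ := by apply mul_le_mul_of_nonneg_right hmain hCpos.le
    calc (1 + lam)^(k-1) * Z * gThr k r ≤ (1 + η/2) * Cn * gThr k r := by
          apply mul_le_mul_of_nonneg_right h1 hg0
      _ = ((1 + η/2) * gThr k r) * Cn := by ring
      _ ≤ (P + η/2) * Cn := by
          apply mul_le_mul_of_nonneg_right _ hCpos.le
          nlinarith
  have hsmall : θ/(r*k) + k * ω ≤ lam * (1/(r*k)) := by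
    rw [hlam]
    have : (θ + r * k^2 * ω) * (1/(r*k)) = θ/(r*k) + k * ω := by field_simp
    rw [this]
  obtain ⟨cl, a, h | ⟨hr3, h⟩⟩ := dm_structure' hr hk hH hNG hCN
  · have ha0 : ∀ j, 0 ≤ a j := by
      intro j
      obtain ⟨j', hj'⟩ : ∃ j' : Fin r, j' ≠ j := by
        have : Nontrivial (Fin r) := Fin.nontrivial_iff_two_le.2 hr
        exact exists_ne j
      obtain ⟨e, he, hc, hd⟩ := hgood j'
      have := h e he hd j
      rw [hc, if_neg hj'] at this
      omega
    obtain ⟨b, hb⟩ : ∃ b : Fin r → ℕ, ∀ j, (b j : ℤ) = a j :=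
      ⟨fun j => (a j).toNat, fun j => Int.toNat_of_nonneg (ha0 j)⟩
    have hE : ∀ e ∈ H, Disjoint e W → ∀ j, (e.filter (fun v => cl v = j)).card
        = b j + if c e = j then 1 else 0 := by
      intro e he hd j
      have := h e he hd j
      rw [← hb j] at this
      exact_mod_cast this
    have hbsum : ∑ j, b j = k - 1 := by
      obtain ⟨e, he, hc, hd⟩ := hgood ⟨0, by omega⟩
      have h1 := dm_type_sum cl e
      rw [sum_congr rfl (fun j _ => hE e he hd j), sum_add_distrib, hH e he] at h1
      simp at h1
      omega
    obtain ⟨i0, hi0⟩ := dm_plus_bound hk hr H W c cl b hbsum (n * (1 + lam)) (by positivity) (by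
      intro j
      have h1 := dm_class_plus hH hM W c cl b hE j
      rw [hMc] at h1
      have h2 := hx j
      have h3 : (k:ℝ) * W.card ≤ k * (ω * n) := by gcongr
      unfold dmp
      push_cast
      have h4 : (b j : ℝ) * (n / k) + (n:ℝ) / (r * k) * (1 + θ) + k * (ω * n)
         = n * ((r * b j + 1)/(r * k) + (θ/(r*k) + k * ω)) := by field_simp; ring
      have h5 : (1:ℝ)/(r*k) ≤ (r * b j + 1)/(r * k) := by
        apply div_le_div_of_nonneg_right _ (by positivity)
        have : (0:ℝ) ≤ r * b j := by positivity
        linarith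
      calc dmn cl j ≤ n * ((r * b j + 1)/(r * k) + (θ/(r*k) + k * ω)) := by linarith
        _ ≤ n * ((r * b j + 1)/(r * k) + lam * ((r * b j + 1)/(r * k))) := by
            apply mul_le_mul_of_nonneg_left _ hnR.le
            have := mul_le_mul_of_nonneg_left h5 hlam0
            linarith
        _ = _ := by ring) hE
    obtain ⟨e, he, hc, hd⟩ := hgood i0
    have h1 := hE e he hd i0
    rw [if_pos hc] at h1
    obtain ⟨v, hv⟩ : (e.filter (fun v => cl v = i0)).Nonempty := by rw [← card_pos]; omega
    rw [mem_filter] at hv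
    have hvW : v ∉ W := disjoint_left.1 hd hv.1
    have h2 := hlow v hvW
    have h3 := hi0 v hv.2
    have h4 : (n * (1 + lam)) ^ (k-1) / ((k-1).factorial : ℝ) * gThr k r = (1 + lam)^(k-1) * Z * gThr k r := by
      rw [hZdef, mul_pow]; ring
    rw [h4] at h3
    linarith
  · have ha1 : ∀ j, 1 ≤ a j := by
      intro j
      obtain ⟨e, he, hc, hd⟩ := hgood j
      have := h e he hd j
      rw [if_pos hc] at this
      omega
    obtain ⟨b, hb⟩ : ∃ b : Fin r → ℕ, ∀ j, (b j : ℤ) = a j :=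
      ⟨fun j => (a j).toNat, fun j => Int.toNat_of_nonneg (by have := ha1 j; omega)⟩
    have hb1 : ∀ j, 1 ≤ b j := by
      intro j
      have := ha1 j
      rw [← hb j] at this
      exact_mod_cast this
    have hE : ∀ e ∈ H, Disjoint e W → ∀ j, (e.filter (fun v => cl v = j)).card
        + (if c e = j then 1 else 0) = b j := by
      intro e he hd j
      have h1 := h e he hd j
      rw [← hb j] at h1
      split_ifs with hc
      · rw [if_pos hc] at h1; omega
      · rw [if_neg hc] at h1; omega
    have hbsum : ∑ j, b j = k + 1 := by
      obtain ⟨e, he, hc, hd⟩ := hgood ⟨0, by omega⟩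
      have h1 := dm_type_sum cl e
      rw [hH e he] at h1
      rw [← sum_congr rfl (fun j _ => hE e he hd j), sum_add_distrib, h1]
      simp
    have hvx : ∀ j, ∃ v, v ∉ W ∧ cl v = j := by
      intro j
      obtain ⟨j', hj'⟩ : ∃ j' : Fin r, j' ≠ j := by
        have : Nontrivial (Fin r) := Fin.nontrivial_iff_two_le.2 hr
        exact exists_ne j
      obtain ⟨e, he, hc, hd⟩ := hgood j'
      have h1 := hE e he hd j
      rw [hc, if_neg hj'] at h1
      have := hb1 j
      obtain ⟨v, hv⟩ : (e.filter (fun v => cl v = j)).Nonempty := by rw [← card_pos]; omega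
      rw [mem_filter] at hv
      exact ⟨v, disjoint_left.1 hd hv.1, hv.2⟩
    by_cases hone : ∃ j, b j = 1
    · obtain ⟨j, hj⟩ := hone
      obtain ⟨v, hvW, hv⟩ := hvx j
      subst hv
      have h1 := dm_minus_one hH hE v hj
      rw [Fintype.card_fin] at h1
      have h2 := dm_class_minus hM W c cl b hE (cl v) hj
      rw [hMc] at h2
      have h3 := hx (cl v)
      have hg := dm_g0 k r hk hr
      have hq : ((r * (k-1) + 1 : ℕ) : ℝ) / ((r * k : ℕ) : ℝ) = (r * (k - 1) + 1) / (r * k) := by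
        push_cast [Nat.cast_sub (show 1 ≤ k by omega)]; rfl
      rw [hq] at hg
      set q : ℝ := ((r:ℝ) * (k - 1) + 1) / (r * k) with hqdef
      have hq1 : (1:ℝ)/(r*k) ≤ q := by
        rw [hqdef]
        apply div_le_div_of_nonneg_right _ (by positivity)
        have : (0:ℝ) ≤ r * (k-1) := mul_nonneg hrR.le (by linarith)
        linarith
      have hω2 : ω ≤ k * ω := by nlinarith
      have h4 : (n:ℝ) - dmn cl (cl v) ≤ n * (1 + lam) * q := by
        have e1 : (n:ℝ) - (n/k - (n:ℝ) / (r * k) * (1 + θ) - ω * n) = n * (q + (θ/(r*k) + ω)) := by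
          rw [hqdef]; field_simp; ring
        calc (n:ℝ) - dmn cl (cl v) ≤ n * (q + (θ/(r*k) + ω)) := by linarith
          _ ≤ n * (q + lam * q) := by
              apply mul_le_mul_of_nonneg_left _ hnR.le
              have := mul_le_mul_of_nonneg_left hq1 hlam0
              linarith
          _ = _ := by ring
      have h5 : 0 ≤ (n:ℝ) - dmn cl (cl v) := by
        have e1 := dmn_sum cl
        rw [Fintype.card_fin] at e1
        have e2 := Finset.single_le_sum (f := dmn cl) (fun j _ => dmn_nonneg cl j) (mem_univ (cl v))
        linarith
      have h6 : ((n:ℝ) - dmn cl (cl v)) ^ (k-1) / ((k-1).factorial : ℝ) ≤ (1 + lam)^(k-1) * Z * gThr k r := by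
        calc ((n:ℝ) - dmn cl (cl v)) ^ (k-1) / ((k-1).factorial : ℝ)
            ≤ (n * (1 + lam) * q) ^ (k-1) / ((k-1).factorial : ℝ) := by
              apply div_le_div_of_nonneg_right _ (by positivity)
              exact pow_le_pow_left₀ h5 h4 _
          _ = (1 + lam)^(k-1) * Z * q^(k-1) := by rw [hZdef, mul_pow, mul_pow]; ring
          _ ≤ _ := by
              apply mul_le_mul_of_nonneg_left hg (by positivity)
      have h7 := hlow v hvW
      linarith
    · push Not at hone
      have hb2 : ∀ j, 2 ≤ b j := by
        intro j
        have := hb1 j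
        have := hone j
        omega
      obtain ⟨u, huW, hu⟩ := hvx ⟨0, by omega⟩
      obtain ⟨v, hvW, hv⟩ := hvx ⟨1, by omega⟩
      obtain ⟨w, hwW, hw⟩ := hvx ⟨2, by omega⟩
      have hpos : ∀ j, 0 < dmn cl j := by
        intro j
        obtain ⟨x, _, hx⟩ := hvx j
        unfold dmn
        have : 0 < (univ.filter (fun v => cl v = j)).card := card_pos.2 ⟨x, by simp [hx]⟩
        exact_mod_cast this
      have h1 := dm_minus_three hH hE hb2 hbsum hpos u v w (by rw [hu, hv]; simp)
        (by rw [hu, hw]; simp) (by rw [hv, hw]; simp)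
      rw [Fintype.card_fin, ← hZdef] at h1
      have l1 := hlow u huW
      have l2 := hlow v hvW
      have l3 := hlow w hwW
      have hε : 1 + ε ≤ 1 + η/2 := by
        refine le_trans ?_ hmain
        have : (1:ℝ) ≤ (1+lam)^(k-1) := one_le_pow₀ (by linarith)
        nlinarith
      have hZ2 : Z ≤ (1 + η/2) * Cn := hZ.trans (mul_le_mul_of_nonneg_right hε hCpos.le)
      have h2 : (P + η/2) * Cn ≥ (5/9 + η/2) * Cn := mul_le_mul_of_nonneg_right (by linarith) hCpos.le
      have : 0 < η * Cn := by positivity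
      have q1 : (1 + η/2) * Cn = Cn + η * Cn / 2 := by ring
      have q2 : (5/9 + η/2) * Cn = 5/9 * Cn + η * Cn / 2 := by ring
      rw [q1] at hZ2
      rw [q2] at h2
      clear_value Z
      linarith

lemma dm_pow_one (m : ℕ) (x : ℝ) (h0 : 0 ≤ x) (h1 : x ≤ 1) : (1 + x)^m ≤ 1 + 2^m * x := by
  have key : (1 + x)^m ≤ 1 + (2^m - 1) * x := by
    induction m with
    | zero => simp
    | succ m ih =>
      have h2 : (1:ℝ) ≤ 2^m := one_le_pow₀ (by norm_num)
      calc (1+x)^(m+1) = (1+x)^m * (1+x) := pow_succ _ _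
        _ ≤ (1 + (2^m - 1) * x) * (1+x) := by
            apply mul_le_mul_of_nonneg_right ih (by linarith)
        _ ≤ 1 + (2^(m+1) - 1) * x := by
            rw [pow_succ]
            nlinarith [mul_nonneg (mul_nonneg (by linarith : (0:ℝ) ≤ 2^m - 1) h0) (by linarith : 0 ≤ 1 - x)]
  linarith

set_option maxHeartbeats 1000000 in
theorem discrepancy_main (k r : ℕ) (hk : 3 ≤ k) (hr : 2 ≤ r) :
    ∃ γ : ℝ, 0 < γ ∧ ∀ η : ℝ, 0 < η → ∃ n₀ : ℕ, ∀ n : ℕ, n₀ ≤ n → k ∣ n →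
      ∀ H : Finset (Finset (Fin n)), HyperUniform k H →
        (∀ v : Fin n, (max (fThr k) (gThr k r) + η) * (((n - 1).choose (k - 1) : ℕ) : ℝ)
            < (hdeg H v : ℝ)) →
        ∀ c : Finset (Fin n) → Fin r,
          ∃ M, IsPM H M ∧ ∃ i : Fin r,
            (n : ℝ) / ((r : ℝ) * (k : ℝ)) * (1 + γ * η) ≤
              ((M.filter (fun e => c e = i)).card : ℝ) := by
  have hkR : (3:ℝ) ≤ k := by exact_mod_cast hk
  have hrR : (2:ℝ) ≤ r := by exact_mod_cast hr
  have hk0 : (0:ℝ) < k := by linarith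
  have hr0 : (0:ℝ) < r := by linarith
  refine ⟨1 / (64 * 2^k * r^2 * k^4), by positivity, ?_⟩
  intro η hη
  set γ : ℝ := 1 / (64 * 2^k * r^2 * k^4) with hγ
  have hγ0 : 0 < γ := by positivity
  set t := γ * η with ht
  have ht0 : 0 < t := by positivity
  have htA : 2^k * (r^2 * k^4 * t) = η / 64 := by
    rw [ht, hγ]; field_simp
  set A : ℝ := r^2 * k^4 * t with hA
  have hA0 : 0 < A := by positivity
  have h2k : (1:ℝ) ≤ 2^k := one_le_pow₀ (by norm_num)
  have hAη : A ≤ η / 64 := by nlinarith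
  have hA1 : r * k^3 * t ≤ A := by
    rw [hA]
    have : (r:ℝ) * k^3 ≤ r^2 * k^4 := by
      have e1 : (r:ℝ) ≤ r^2 := by nlinarith
      have e2 : (k:ℝ)^3 ≤ k^4 := pow_le_pow_right₀ (by linarith) (by norm_num)
      gcongr
    gcongr
  have hA2 : r^2 * k^3 * t ≤ A := by
    rw [hA]
    have e2 : (k:ℝ)^3 ≤ k^4 := pow_le_pow_right₀ (by linarith) (by norm_num)
    gcongr
  have hA3 : r * t ≤ A := by
    rw [hA]
    have : (r:ℝ) ≤ r^2 * k^4 := by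
      have e1 : (r:ℝ) ≤ r^2 := by nlinarith
      have e2 : (1:ℝ) ≤ k^4 := one_le_pow₀ (by linarith)
      nlinarith
    gcongr
  have hA4 : k^3 * t ≤ A := by
    refine le_trans ?_ hA1
    have : (0:ℝ) ≤ k^3 * t := by positivity
    nlinarith
  have hA5 : t ≤ A := by nlinarith
  have hA6 : k^2 * t ≤ A := by
    refine le_trans ?_ hA4
    have e2 : (k:ℝ)^2 ≤ k^3 := pow_le_pow_right₀ (by linarith) (by norm_num)
    gcongr
  obtain ⟨nf, hnf⟩ := dm_f_upper k (η/2) (by positivity)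
  obtain ⟨nZ, hnZ⟩ := dm_pow_le (k-1) (η/8) (by positivity)
  set ω : ℝ := 4 * r * k^2 * t with hω
  have hω0 : 0 < ω := by positivity
  obtain ⟨n1, hn1⟩ := exists_nat_ge (1/t)
  obtain ⟨n2, hn2⟩ := exists_nat_ge ((4*k^2+1)/ω)
  refine ⟨k + 2 * nf + nZ + n1 + n2, ?_⟩
  intro n hn hkn H hH hD c
  by_contra hcon
  push Not at hcon
  set P := max (fThr k) (gThr k r) with hP
  have hfP : fThr k ≤ P := le_max_left _ _
  have hgP : gThr k r ≤ P := le_max_right _ _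
  have hP59 : 5/9 ≤ P := (dm_f_lower k hk).trans hfP
  have hnk : k ≤ n := by omega
  have hnR : (0:ℝ) < n := by
    have : 0 < n := by omega
    exact_mod_cast this
  set Cn : ℝ := (((n-1).choose (k-1) : ℕ) : ℝ) with hCn
  have hCpos : 0 < Cn := by
    rw [hCn]
    have : 0 < (n-1).choose (k-1) := Nat.choose_pos (by omega)
    exact_mod_cast this
  have hPη : P + η < 1 := by
    have h1 := hD ⟨0, by omega⟩
    have h2 := dm_hdeg_le H hH ⟨0, by omega⟩
    rw [Fintype.card_fin] at h2
    have h3 : (hdeg H ⟨0, by omega⟩ : ℝ) ≤ Cn := by rw [hCn]; exact_mod_cast h2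
    by_contra h4
    push Not at h4
    nlinarith
  have hη1 : η ≤ 1 := by linarith
  have htn : 1 ≤ t * n := by
    have : (n1:ℝ) ≤ n := by
      have : n1 ≤ n := by omega
      exact_mod_cast this
    have h2 : 1/t ≤ n := hn1.trans this
    rw [div_le_iff₀ ht0] at h2
    linarith
  have hωn : 4*k^2+1 ≤ ω * n := by
    have : (n2:ℝ) ≤ n := by
      have : n2 ≤ n := by omega
      exact_mod_cast this
    have h2 : (4*k^2+1)/ω ≤ n := hn2.trans this
    rw [div_le_iff₀ hω0] at h2
    linarith
  set N := ⌈t * n⌉₊ with hN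
  have hN1 : t * n ≤ N := Nat.le_ceil _
  have hN2 : (N:ℝ) ≤ 2 * t * n := by
    have := (Nat.ceil_lt_add_one (show 0 ≤ t * n by positivity)).le
    linarith
  have hkk : (k:ℝ) * (k+1) ≤ 2 * k^2 := by nlinarith
  have hSF : ∀ (i : Fin r) (F : Finset (Finset (Finset (Fin n)) × Finset (Finset (Fin n)))), F.card ≤ N →
      (∀ p ∈ F, DmGadget k H c i p) →
      ((F.biUnion (fun p => p.1.biUnion id)).card : ℝ) ≤ 4 * k^2 * t * n := by
    intro i F hF hp
    have h1 : (F.biUnion (fun p => p.1.biUnion id)).card ≤ F.card * (k * (k+1)) :=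
      card_biUnion_le_card_mul _ _ _ (fun p hpF => (hp p hpF).2.2.2.1)
    calc ((F.biUnion (fun p => p.1.biUnion id)).card : ℝ) ≤ F.card * (k * (k+1)) := by exact_mod_cast h1
      _ ≤ N * (k * (k+1)) := by gcongr
      _ ≤ (2 * t * n) * (2 * k^2) := by gcongr
      _ = _ := by ring
  have hfam : ∀ i : Fin r, ∃ F : Finset (Finset (Finset (Fin n)) × Finset (Finset (Fin n))), F.card < N ∧
      (∀ p ∈ F, DmGadget k H c i p) ∧
      ∀ p, DmGadget k H c i p → ¬ Disjoint (p.1.biUnion id) (F.biUnion (fun p => p.1.biUnion id)) := by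
    intro i
    rcases dm_family (DmGadget k H c i) (fun p => p.1.biUnion id) (by
      intro p hp
      obtain ⟨h1, h2, h3, h4, h5⟩ := hp
      rw [h3]
      obtain ⟨e, he⟩ : (p.2.filter (fun e => c e = i)).Nonempty := by rw [← card_pos]; omega
      rw [mem_filter] at he
      have hec := hH e (h2.1 he.1)
      obtain ⟨v, hv⟩ : e.Nonempty := by rw [← card_pos]; omega
      exact ⟨v, mem_biUnion.2 ⟨e, he.1, hv⟩⟩) N with ⟨F, hFc, hF, hFd⟩ | h
    · exfalso
      have hkt : 2 * k * (4 * k^2 * t) ≤ η / 2 := by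
        have : 2 * k * (4 * k^2 * t) = 8 * (k^3 * t) := by ring
        linarith
      obtain ⟨MA, MB, hMA, hMB, hcnt⟩ := dm_caseA hk hnk hkn H hH c i F hF hFd (P + η) (4 * k^2 * t)
        hD (hSF i F hFc.le hF) (by linarith) (by linarith) (by
          intro m _ hm2 hkm H' hH' hv
          apply hnf m (by omega) hkm H' hH'
          intro v
          refine le_trans ?_ (hv v)
          apply mul_le_mul_of_nonneg_right _ (by positivity)
          linarith)
      set B := (n : ℝ) / ((r : ℝ) * (k : ℝ)) * (1 + t) with hB
      have h1 := dm_cnt_lower c MA i B (fun j => (hcon MA hMA j).le)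
      have h2 := hcon MB hMB i
      have h3 : ((MA.filter (fun e => c e = i)).card : ℝ) + N ≤ (MB.filter (fun e => c e = i)).card := by
        rw [← hFc]; exact_mod_cast hcnt
      have h4 : (MA.card : ℝ) = n / k := by
        have := dm_pm_card hH hMA
        rw [Fintype.card_fin] at this
        rw [eq_div_iff hk0.ne']
        exact_mod_cast this.symm
      have h5 : r * B = n / k + t * n / k := by rw [hB]; field_simp
      have h6 : t * n / k ≤ t * n := div_le_self (by positivity) (by linarith)
      rw [h4] at h1
      have h7 : (r - 1) * B = r * B - B := by ring
      linarith
    · exact h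
  choose F hFc hF hFmax using hfam
  set W : Finset (Fin n) := univ.biUnion (fun i => (F i).biUnion (fun p => p.1.biUnion id)) with hWdef
  have hW : (W.card : ℝ) ≤ ω * n := by
    calc (W.card : ℝ) ≤ ((∑ i : Fin r, ((F i).biUnion (fun p => p.1.biUnion id)).card : ℕ) : ℝ) := by
          exact_mod_cast card_biUnion_le
      _ ≤ ∑ i : Fin r, 4 * k^2 * t * n := by
          push_cast
          exact sum_le_sum fun i _ => hSF i (F i) (hFc i).le (hF i)
      _ = ω * n := by
          rw [sum_const, card_univ, Fintype.card_fin, nsmul_eq_mul, hω]; ring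
  have hNG : DmNG k H W c := by
    have key : ∀ A B : Finset (Finset (Fin n)), DmMat H A → DmMat H B → A.biUnion id = B.biUnion id →
        Disjoint (A.biUnion id) W → (A.biUnion id).card ≤ k * (k + 1) →
        ∀ i, (B.filter (fun e => c e = i)).card ≤ (A.filter (fun e => c e = i)).card := by
      intro A B hA hB hAB hdis hcard i
      by_contra hlt
      push Not at hlt
      refine hFmax i (A, B) ⟨hA, hB, hAB, hcard, hlt⟩ ?_
      exact disjoint_of_subset_right
        (subset_biUnion_of_mem (fun i => (F i).biUnion (fun p => p.1.biUnion id)) (mem_univ i)) hdis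
    intro A B hA hB hAB hdis hcard i
    exact le_antisymm (key B A hB hA hAB.symm (hAB ▸ hdis) (hAB ▸ hcard) i) (key A B hA hB hAB hdis hcard i)
  have h2kω : 2 * k * (2 * ω) ≤ η / 2 := by
    have : 2 * k * (2 * ω) = 16 * (r * k^3 * t) := by rw [hω]; ring
    linarith
  have hCN : DmCN k H W := by
    intro u v X hX
    apply dm_common H hH u v (W ∪ X)
    intro u Y hY
    rw [Fintype.card_fin]
    have hYc : (Y.card : ℝ) ≤ (2 * ω) * n := by
      have h1 : Y.card ≤ W.card + 4 * k^2 + 1 := by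
        have := card_union_le W X
        omega
      have h2 : (Y.card : ℝ) ≤ W.card + 4 * k^2 + 1 := by exact_mod_cast h1
      linarith
    have := dm_deg_after hk hnk H hH u Y (P + η) (2 * ω) (hD u) hYc
    refine lt_of_le_of_lt ?_ this
    rw [← hCn]
    nlinarith
  obtain ⟨M, hM⟩ := hnf n (by omega) hkn H hH (by
    intro v
    refine le_trans ?_ (hD v).le
    apply mul_le_mul_of_nonneg_right _ hCpos.le
    linarith)
  refine dm_caseB hk hr hnk H hH c W hNG hCN M hM P η ω t (η/8) hη hP59 (by linarith) hgP hD hω0.le ht0.le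
    (by positivity) hW (by nlinarith) (fun j => (hcon M hM j).le) ?_ ?_ (hnZ n (by omega))
  · rw [lt_div_iff₀ (by positivity)]
    have : ω * (r * k) = 4 * (r^2 * k^3 * t) := by rw [hω]; ring
    rw [this]
    nlinarith
  · have e1 : r * k^2 * ω = 4 * A := by rw [hω, hA]; ring
    rw [e1]
    have e2 : t + 4 * A ≤ 5 * A := by linarith
    have e3 : (1 + (t + 4 * A))^(k-1) ≤ 1 + 5 * (η/64) := by
      calc (1 + (t + 4 * A))^(k-1) ≤ 1 + 2^(k-1) * (t + 4 * A) := by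
            apply dm_pow_one _ _ (by positivity) (by linarith)
        _ ≤ 1 + 2^k * (5 * A) := by
            have : (2:ℝ)^(k-1) ≤ 2^k := pow_le_pow_right₀ (by norm_num) (by omega)
            gcongr
        _ = 1 + 5 * (2^k * A) := by ring
        _ = _ := by rw [htA]
    calc (1 + (t + 4 * A))^(k-1) * (1 + η/8) ≤ (1 + 5 * (η/64)) * (1 + η/8) := by
          apply mul_le_mul_of_nonneg_right e3 (by positivity)
      _ ≤ 1 + η/2 := by nlinarith
end
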